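/- Let h be a nonzero harmonic function in a domain Ω ⊂ ℝⁿ. There exists C = C(n) such that for every ball B = B(x,r) with closure of B(x,8r) contained in Ω, ℋ^{n−1}( Z(h) ∩ B(x,r) ) ≤ C ( N_h(x,4r) + 1 ) r^{n−1}. -/

import Mathlib

noncomputable section

open MeasureTheory Metric Set Filter Asymptotics
open scoped Topology NNReal ENNReal RealInnerProductSpace

namespace NodalNeumann

/-- Euclidean space `ℝⁿ`. -/
abbrev Euc (n : ℕ) : Type := EuclideanSpace ℝ (Fin n)

/-- The first `n` coordinates `y'` of a point `y = (y', y'') ∈ ℝ^{n+1}`. -/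
def front {n : ℕ} (y : Euc (n + 1)) : Euc n :=
  (EuclideanSpace.equiv (Fin n) ℝ).symm fun i => y i.castSucc

/-- The last coordinate `y''` of a point `y = (y', y'') ∈ ℝ^{n+1}`. -/
def lastc {n : ℕ} (y : Euc (n + 1)) : ℝ := y (Fin.last n)

/-- `(v, a) ∈ ℝ^{n+1}` built from `v ∈ ℝⁿ` and `a ∈ ℝ`. -/
def snocVec {n : ℕ} (v : Euc n) (a : ℝ) : Euc (n + 1) :=
  (EuclideanSpace.equiv (Fin (n + 1)) ℝ).symm
    fun i => if h : i = Fin.last n then a else v (i.castPred h)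

/-- The Laplacian of `u : ℝⁿ → ℝ`. -/
def laplacian {n : ℕ} (u : Euc n → ℝ) (x : Euc n) : ℝ :=
  ∑ i : Fin n, fderiv ℝ (fun y => fderiv ℝ u y (EuclideanSpace.single i 1)) x
    (EuclideanSpace.single i 1)

/-- `u` is harmonic on `s`. -/
def HarmonicOn {n : ℕ} (u : Euc n → ℝ) (s : Set (Euc n)) : Prop :=
  ContDiffOn ℝ 2 u s ∧ ∀ x ∈ s, laplacian u x = 0

/-- `ν` is the outward unit normal vector of `Ω` at the boundary point `x`:
it is a unit vector, points out of `Ω`, `-ν` points into `Ω`, and it is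
orthogonal to the boundary at `x` (in the little-o sense). -/
def OutwardNormalAt {n : ℕ} (Ω : Set (Euc n)) (x ν : Euc n) : Prop :=
  ‖ν‖ = 1 ∧
  (∀ᶠ t : ℝ in 𝓝[>] (0 : ℝ), x + t • ν ∉ closure Ω) ∧
  (∀ᶠ t : ℝ in 𝓝[>] (0 : ℝ), x - t • ν ∈ Ω) ∧
  (fun y : Euc n => (⟪ν, y - x⟫)) =o[𝓝[frontier Ω] x] fun y => ‖y - x‖

/-- `ν` is an outward unit normal field of `Ω` along `∂Ω ∩ s`. -/
def OutwardNormalFieldOn {n : ℕ} (Ω : Set (Euc n)) (ν : Euc n → Euc n)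
    (s : Set (Euc n)) : Prop :=
  ∀ x ∈ frontier Ω ∩ s, OutwardNormalAt Ω x (ν x)

/-- The homogeneous Neumann boundary condition `∂h/∂ν = 0` on `∂Ω ∩ s`. -/
def NeumannBC {n : ℕ} (Ω : Set (Euc n)) (ν : Euc n → Euc n) (h : Euc n → ℝ)
    (s : Set (Euc n)) : Prop :=
  ∀ x ∈ frontier Ω ∩ s, DifferentiableWithinAt ℝ h (closure Ω) x ∧
    fderivWithin ℝ h (closure Ω) x (ν x) = 0

/-- `f : ℝⁿ → ℝ` is `C^{1,1}` with character `M`: differentiable with `M`-Lipschitz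
derivative (and itself `M`-Lipschitz). -/
def IsC11FunWith {n : ℕ} (M : ℝ≥0) (f : Euc n → ℝ) : Prop :=
  Differentiable ℝ f ∧ LipschitzWith M f ∧ LipschitzWith M fun x => fderiv ℝ f x

/-- `Ω ∩ B(x,r)` is, after an isometry `T` of `ℝ^{n+1}` with `T 0 = x`, the region
in the ball above the graph of a function `f` with `f 0 = 0` satisfying `P`. -/
def IsGraphBall {n : ℕ} (Ω : Set (Euc (n + 1))) (x : Euc (n + 1)) (r : ℝ)
    (P : (Euc n → ℝ) → Prop) : Prop :=
  ∃ (T : Euc (n + 1) ≃ᵃⁱ[ℝ] Euc (n + 1)) (f : Euc n → ℝ), P f ∧ T 0 = x ∧ f 0 = 0 ∧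
    Ω ∩ ball x r =
      ⇑T '' {y : Euc (n + 1) | y ∈ ball (0 : Euc (n + 1)) r ∧ f (front y) < lastc y}

/-- `∂Ω ∩ B(x,r) ∈ Lip(τ)`. -/
def LipGraphBall {n : ℕ} (Ω : Set (Euc (n + 1))) (x : Euc (n + 1)) (r τ : ℝ) : Prop :=
  IsGraphBall Ω x r fun f => LipschitzWith (Real.toNNReal τ) f

/-- `Ω` is a `C^{1,1}` domain with character `(ρ, M)`. -/
def IsC11DomainWith {n : ℕ} (Ω : Set (Euc (n + 1))) (ρ : ℝ) (M : ℝ≥0) : Prop :=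
  IsOpen Ω ∧ IsConnected Ω ∧ 0 < ρ ∧
    ∀ x ∈ frontier Ω, IsGraphBall Ω x ρ (IsC11FunWith M)

/-- `Ω` is a `C^{1,1}` domain. -/
def IsC11Domain {n : ℕ} (Ω : Set (Euc (n + 1))) : Prop :=
  ∃ (ρ : ℝ) (M : ℝ≥0), IsC11DomainWith Ω ρ M

/-- `Ω` is a Lipschitz domain with character `(ρ, M)`. -/
def IsLipDomainWith {n : ℕ} (Ω : Set (Euc (n + 1))) (ρ : ℝ) (M : ℝ≥0) : Prop :=
  IsOpen Ω ∧ IsConnected Ω ∧ 0 < ρ ∧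
    ∀ x ∈ frontier Ω, IsGraphBall Ω x ρ fun f => LipschitzWith M f

/-- The portion `∂Ω ∩ s` of the boundary has `C^{1,1}` character `(ρ, M)`. -/
def HasC11CharacterOn {n : ℕ} (Ω : Set (Euc (n + 1))) (s : Set (Euc (n + 1)))
    (ρ : ℝ) (M : ℝ≥0) : Prop :=
  0 < ρ ∧ ∀ x ∈ frontier Ω ∩ s, IsGraphBall Ω x ρ (IsC11FunWith M)

/-- `H_h(x,r) = ∫_{B(x,r) ∩ Ω} h²`. -/
def Hfun {n : ℕ} (Ω : Set (Euc n)) (h : Euc n → ℝ) (x : Euc n) (r : ℝ) : ℝ :=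
  ∫ y in ball x r ∩ Ω, h y ^ 2

/-- The doubling index `N_h(x,r) = log (H_h(x,2r) / H_h(x,r))`. -/
def Nfun {n : ℕ} (Ω : Set (Euc n)) (h : Euc n → ℝ) (x : Euc n) (r : ℝ) : ℝ :=
  Real.log (Hfun Ω h x (2 * r) / Hfun Ω h x r)

/-- Closed axis-parallel cube with centre `c` and side length `s`. -/
def cube {n : ℕ} (c : Euc n) (s : ℝ) : Set (Euc n) :=
  {y : Euc n | ∀ i, |y i - c i| ≤ s / 2}

/-- Maximal doubling index `N*_h(Q)` over the cube of centre `c` and side `s`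
(whose diameter is `√n · s`). -/
def Nstar {n : ℕ} (Ω : Set (Euc n)) (h : Euc n → ℝ) (c : Euc n) (s : ℝ) : ℝ :=
  sSup {N : ℝ | ∃ x ∈ cube c s ∩ closure Ω, ∃ r : ℝ,
    0 < r ∧ r ≤ Real.sqrt n * s ∧ N = Nfun Ω h x r}

/-- The nodal set `Z(h) = {x ∈ Ω : h x = 0}`. -/
def zeroSet {n : ℕ} (Ω : Set (Euc n)) (h : Euc n → ℝ) : Set (Euc n) :=
  {x ∈ Ω | h x = 0}

/-- `sup_s g`. -/
def supOn {α : Type*} (g : α → ℝ) (s : Set α) : ℝ := sSup (g '' s)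

/-- The open cylinder `S(x,r,t)` of radius `r` and height `t` whose lower face is
centred at `x`. -/
def cyl {n : ℕ} (x : Euc (n + 1)) (r t : ℝ) : Set (Euc (n + 1)) :=
  {y : Euc (n + 1) | ‖front y - front x‖ < r ∧ 0 < lastc y - lastc x ∧
    lastc y - lastc x < t}

/-- In the chosen coordinates (centred at `x`, with `e_n = -ν(x)`), `Ω ∩ B(x,R)`
is the region above the graph of the `τ`-Lipschitz function `f` with `f 0 = 0`. -/
def AlignedLipGraphOn {n : ℕ} (Ω : Set (Euc (n + 1))) (x : Euc (n + 1)) (R τ : ℝ)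
    (f : Euc n → ℝ) : Prop :=
  LipschitzWith (Real.toNNReal τ) f ∧ f 0 = 0 ∧
    Ω ∩ ball x R = {y ∈ ball x R | f (front (y - x)) < lastc (y - x)}

/-- `z` is the centre of one of the boundary cubes `q ∈ 𝓑_k(Q)` of the standard
construction for the cube `Q` of centre `xQ` and side `s`: the projection of `z` is
the centre of one of the `2^{k·n}` subcubes of side `s/2^k` of the projection of
`Q`, and `z` lies on `∂Ω`. The cube `q` itself is `cube z (s/2^k)`. -/
def IsBdryCubeCenter {n : ℕ} (Ω : Set (Euc (n + 1))) (xQ : Euc (n + 1)) (s : ℝ)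
    (k : ℕ) (z : Euc (n + 1)) : Prop :=
  z ∈ frontier Ω ∧ ∃ a : Fin n → ℕ, (∀ i, a i < 2 ^ k) ∧
    ∀ i : Fin n, z i.castSucc = xQ i.castSucc - s / 2 + ((a i : ℝ) + 1 / 2) * (s / 2 ^ k)

/-- The infinite cylinder `Ω₀ × ℝ ⊂ ℝ^{n+1}` over `Ω₀ ⊂ ℝⁿ`. -/
def prodDomain {n : ℕ} (Ω₀ : Set (Euc n)) : Set (Euc (n + 1)) :=
  {y : Euc (n + 1) | front y ∈ Ω₀}

/-- The harmonic extension `h(x,t) = e^{√λ t} u(x)` of `u` to `Ω₀ × ℝ`. -/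
def hExt {n : ℕ} (lam : ℝ) (u : Euc n → ℝ) : Euc (n + 1) → ℝ :=
  fun y => Real.exp (Real.sqrt lam * lastc y) * u (front y)

/-!
A harmonic function `u` has a mean value property against the compactly supported kernel
`(1 - |y|²)₊²`, which bounds its `k`-th directional derivatives by `k! M (A / R) ^ k` when
`|u| ≤ M` on a ball of radius `R`. On a short segment such bounds let Lagrange interpolation at
the zeros of `u` control both the number of zeros and the size of the sublevel sets of `|u|`. With
the gap `log (M / |u|)` as a measure of smallness, the number of zeros is at most a constant times
one plus the gap at any single point of the segment, and so is the average of one plus the gap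
over the segment. Integrating the latter along coordinate directions spreads the gap at one point
over a cube. By unique continuation the nodal set is a countable union of Lipschitz graphs, so its
measure is controlled by the integrals over the coordinate hyperplanes of the number of zeros on
axis-parallel lines. Finally the doubling index bounds the gap at a maximum point of `|u|`, from
which a chain of short steps reaches every small cube.
-/

/-! ### Sequences of successive derivatives -/

/-- `F 0, F 1, F 2, …` are the successive derivatives of `F 0` on `s`. The sequence itself is the
datum, so that no question of the existence of iterated derivatives outside `s` arises. -/
def IsDerivSeqOn (F : ℕ → ℝ → ℝ) (s : Set ℝ) : Prop :=
  ∀ k, ∀ t ∈ s, HasDerivAt (F k) (F (k + 1) t) t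

namespace IsDerivSeqOn

variable {F G : ℕ → ℝ → ℝ} {s : Set ℝ}

lemma mono {u : Set ℝ} (hF : IsDerivSeqOn F s) (hu : u ⊆ s) : IsDerivSeqOn F u :=
  fun k t ht => hF k t (hu ht)

lemma tail (hF : IsDerivSeqOn F s) : IsDerivSeqOn (fun k => F (k + 1)) s :=
  fun k => hF (k + 1)

lemma continuousOn (hF : IsDerivSeqOn F s) (k : ℕ) : ContinuousOn (F k) s :=
  fun t ht => (hF k t ht).continuousAt.continuousWithinAt

lemma sub (hF : IsDerivSeqOn F s) (hG : IsDerivSeqOn G s) :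
    IsDerivSeqOn (fun k t => F k t - G k t) s :=
  fun k t ht => (hF k t ht).sub (hG k t ht)

end IsDerivSeqOn

open Polynomial in
lemma isDerivSeqOn_eval_iterate_derivative (P : ℝ[X]) (s : Set ℝ) :
    IsDerivSeqOn (fun k t => (derivative^[k] P).eval t) s := fun k t _ => by
  simpa only [← Function.iterate_succ_apply' (f := derivative)]
    using (derivative^[k] P).hasDerivAt t

lemma IsDerivSeqOn.exists_eq_zero_of_strictMono {s : Set ℝ} (hs : s.OrdConnected) {m : ℕ} :
    ∀ {F : ℕ → ℝ → ℝ}, IsDerivSeqOn F s → ∀ {x : Fin (m + 1) → ℝ}, StrictMono x →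
      (∀ i, x i ∈ s) → (∀ i, F 0 (x i) = 0) → ∃ ξ ∈ s, F m ξ = 0 := by
  induction m with
  | zero => exact fun _ x _ hx h0 => ⟨x 0, hx 0, h0 0⟩
  | succ m ih =>
    intro F hF x hmono hx h0
    have rolle (i : Fin (m + 1)) : ∃ y ∈ Ioo (x i.castSucc) (x i.succ), F 1 y = 0 := by
      have hsub : Icc (x i.castSucc) (x i.succ) ⊆ s := hs.out (hx _) (hx _)
      exact exists_hasDerivAt_eq_zero (hmono Fin.castSucc_lt_succ)
        ((hF.mono hsub).continuousOn 0) (by rw [h0, h0])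
        fun t ht => hF 0 t (hsub (Ioo_subset_Icc_self ht))
    choose y hy hy0 using rolle
    have hymono : StrictMono y := fun i j hij =>
      (hy i).2.trans_le ((hmono.monotone (Fin.castSucc_lt_iff_succ_le.1 hij)).trans (hy j).1.le)
    exact ih hF.tail hymono
      (fun i => hs.out (hx _) (hx _) (Ioo_subset_Icc_self (hy i))) hy0

lemma IsDerivSeqOn.exists_eq_zero_of_card {F : ℕ → ℝ → ℝ} {s : Set ℝ} (hF : IsDerivSeqOn F s)
    (hs : s.OrdConnected) {m : ℕ} {S : Finset ℝ} (hcard : S.card = m + 1)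
    (hS : ∀ t ∈ S, t ∈ s) (h0 : ∀ t ∈ S, F 0 t = 0) : ∃ ξ ∈ s, F m ξ = 0 :=
  exists_eq_zero_of_strictMono hs hF (S.orderEmbOfFin hcard).strictMono
    (fun i => hS _ (S.orderEmbOfFin_mem hcard i)) fun i => h0 _ (S.orderEmbOfFin_mem hcard i)

open Polynomial in
lemma iterate_derivative_natDegree_of_monic {R : Type*} [CommSemiring R] {P : R[X]}
    (hP : P.Monic) : derivative^[P.natDegree] P = C (P.natDegree.factorial : R) := by
  have hdeg : (derivative^[P.natDegree] P).natDegree ≤ 0 :=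
    (natDegree_iterate_derivative P P.natDegree).trans (Nat.sub_self _).le
  rw [eq_C_of_natDegree_le_zero hdeg, coeff_iterate_derivative, zero_add, hP.coeff_natDegree,
    Nat.descFactorial_self, nsmul_one]

open Polynomial in
lemma iterate_derivative_interpolate_add_C_mul_nodal {K ι : Type*} [Field K] [DecidableEq ι]
    {T : Finset ι} {x : ι → K} (hx : Set.InjOn x T) (y : ι → K) (c : K) :
    derivative^[T.card] (Lagrange.interpolate T x y + C c * Lagrange.nodal T x) =
      C (c * T.card.factorial) := by
  have hnodal := iterate_derivative_natDegree_of_monic (Lagrange.nodal_monic (s := T) (v := x))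
  rw [Lagrange.natDegree_nodal] at hnodal
  rw [iterate_map_add, iterate_derivative_C_mul, hnodal, C_mul,
    iterate_derivative_eq_zero_of_degree_lt (Lagrange.degree_interpolate_lt y hx), zero_add]

open Polynomial in
/- The error constant `c` is chosen so that `F 0` minus the interpolant minus `c` times the nodal
polynomial also vanishes at `t`; Rolle then produces a zero of its `m`-th derivative. -/
lemma IsDerivSeqOn.exists_eq_eval_interpolate_add {F : ℕ → ℝ → ℝ} {s : Set ℝ}
    (hF : IsDerivSeqOn F s) (hs : s.OrdConnected) {ι : Type*} [DecidableEq ι] {T : Finset ι}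
    {x : ι → ℝ} (hinj : Set.InjOn x T) (hx : ∀ i ∈ T, x i ∈ s) {t : ℝ} (ht : t ∈ s) :
    ∃ ξ ∈ s, F 0 t = (Lagrange.interpolate T x fun i => F 0 (x i)).eval t
      + F T.card ξ / T.card.factorial * ∏ i ∈ T, (t - x i) := by
  set P := Lagrange.interpolate T x fun i => F 0 (x i)
  have hPx (i) (hi : i ∈ T) : P.eval (x i) = F 0 (x i) :=
    Lagrange.eval_interpolate_at_node _ hinj hi
  rw [← Lagrange.eval_nodal]
  set W := Lagrange.nodal T x
  by_cases hnode : ∃ i ∈ T, x i = t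
  · obtain ⟨i, hi, rfl⟩ := hnode
    exact ⟨x i, ht, by rw [hPx i hi, Lagrange.eval_nodal_at_node hi, mul_zero, add_zero]⟩
  have hWt : W.eval t ≠ 0 := by
    rw [Lagrange.eval_nodal, Finset.prod_ne_zero_iff]
    exact fun i hi => sub_ne_zero.2 fun h => hnode ⟨i, hi, h.symm⟩
  set c := (F 0 t - P.eval t) / W.eval t with hc
  have hcard : (insert t (T.image x)).card = T.card + 1 := by
    rw [Finset.card_insert_of_notMem (by simpa using hnode), Finset.card_image_of_injOn hinj]
  obtain ⟨ξ, hξ, h0⟩ :=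
    (hF.sub (isDerivSeqOn_eval_iterate_derivative (P + C c * W) s)).exists_eq_zero_of_card
      hs hcard
      (by simpa using And.intro ht hx)
      (by
        simp only [Finset.forall_mem_insert, Finset.forall_mem_image, Function.iterate_zero, id,
          eval_add, eval_mul, eval_C]
        refine ⟨by rw [hc, div_mul_cancel₀ _ hWt]; ring, fun i hi => ?_⟩
        rw [hPx i hi, Lagrange.eval_nodal_at_node hi]
        ring)
  rw [iterate_derivative_interpolate_add_C_mul_nodal hinj, eval_C, sub_eq_zero] at h0
  refine ⟨ξ, hξ, ?_⟩
  rw [h0, mul_div_cancel_right₀ _ (by positivity), hc, div_mul_cancel₀ _ hWt]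
  ring

lemma IsDerivSeqOn.abs_le_of_eq_zero {b B : ℝ} {m : ℕ} :
    ∀ {F : ℕ → ℝ → ℝ}, IsDerivSeqOn F (Icc 0 b) → (∀ k < m, F k 0 = 0) →
      (∀ t ∈ Icc 0 b, |F m t| ≤ B) → ∀ t ∈ Icc 0 b, |F 0 t| ≤ B * t ^ m / m.factorial := by
  induction m with
  | zero => intro F _ _ hB t ht; simpa using hB t ht
  | succ m ih =>
    intro F hF h0 hB t ht
    have hderiv := ih hF.tail (fun k hk => h0 (k + 1) (by lia)) hB
    have hpow (x : ℝ) : HasDerivAt (fun t : ℝ => B * t ^ (m + 1) / (m + 1).factorial)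
        (B * x ^ m / m.factorial) x := by
      convert! ((hasDerivAt_pow (m + 1) x).const_mul B).div_const ((m + 1).factorial : ℝ) using 1
      rw [Nat.factorial_succ]
      push_cast
      field_simp
    exact image_norm_le_of_norm_deriv_right_le_deriv_boundary (hF.continuousOn 0)
      (fun x hx => (hF 0 x (Ico_subset_Icc_self hx)).hasDerivWithinAt)
      (by simp [h0 0]) hpow (fun x hx => hderiv x (Ico_subset_Icc_self hx)) ht

lemma IsDerivSeqOn.eq_zero_of_forall_eq_zero {F : ℕ → ℝ → ℝ} (hF : IsDerivSeqOn F (Icc 0 1))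
    (h0 : ∀ k, F k 0 = 0) {M q : ℝ} (hq0 : 0 ≤ q) (hq1 : q < 1)
    (hB : ∀ k, ∀ t ∈ Icc (0 : ℝ) 1, |F k t| ≤ M * k.factorial * q ^ k) : F 0 1 = 0 := by
  have hle (m : ℕ) : |F 0 1| ≤ M * q ^ m := by
    refine (hF.abs_le_of_eq_zero (fun k _ => h0 k) (hB m) 1 (by simp)).trans_eq ?_
    field_simp
    rw [one_pow, mul_one]
  have hlim := (tendsto_pow_atTop_nhds_zero_of_lt_one hq0 hq1).const_mul M
  rw [mul_zero] at hlim
  exact abs_nonpos_iff.1 (ge_of_tendsto' hlim hle)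

/-! ### Zeros and sublevel sets in one variable -/

/-- `F` satisfies on `[-a, a]` the Cauchy estimates of a function which is analytic and bounded by
`M` in the `3a`-neighbourhood of that interval. -/
structure IsCauchyBounded (F : ℕ → ℝ → ℝ) (a M : ℝ) : Prop where
  isDerivSeqOn : IsDerivSeqOn F (Icc (-a) a)
  abs_le_factorial : ∀ k, ∀ t ∈ Icc (-a) a, |F k t| ≤ M * k.factorial / (3 * a) ^ k

/-- The logarithmic size `log (M / |v|)` of `v` relative to a bound `M`, taken to be `∞` where the
logarithm would be `Real.log 0 = 0`. -/
def logGap (M v : ℝ) : ℝ≥0∞ := if v = 0 then ⊤ else ENNReal.ofReal (Real.log (M / |v|))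

lemma logGap_zero (M : ℝ) : logGap M 0 = ⊤ := if_pos rfl

lemma logGap_of_ne_zero (M : ℝ) {v : ℝ} (hv : v ≠ 0) :
    logGap M v = ENNReal.ofReal (Real.log (M / |v|)) := if_neg hv

lemma measurable_logGap (M : ℝ) : Measurable (logGap M) :=
  Measurable.ite (measurableSet_singleton 0) measurable_const
    (Real.measurable_log.comp (measurable_const.div measurable_norm)).ennreal_ofReal

namespace IsCauchyBounded

variable {F : ℕ → ℝ → ℝ} {a M : ℝ}

lemma abs_zero_le (h : IsCauchyBounded F a M) {t : ℝ} (ht : t ∈ Icc (-a) a) : |F 0 t| ≤ M := by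
  simpa using h.abs_le_factorial 0 t ht

lemma pos (h : IsCauchyBounded F a M) (ha : 0 < a) (h0 : F 0 0 ≠ 0) : 0 < M :=
  (abs_pos.2 h0).trans_le (h.abs_zero_le ⟨by linarith, ha.le⟩)

lemma abs_div_factorial_mul_prod_le (h : IsCauchyBounded F a M) (ha : 0 < a) (hM : 0 ≤ M)
    {ι : Type*} {T : Finset ι} {x : ι → ℝ} (hx : ∀ i ∈ T, x i ∈ Icc (-a) a) {ξ : ℝ}
    (hξ : ξ ∈ Icc (-a) a) :
    |F T.card ξ / T.card.factorial * ∏ i ∈ T, (0 - x i)| ≤ M * Real.exp (-T.card) := by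
  have hprod : |∏ i ∈ T, (0 - x i)| ≤ a ^ T.card := by
    rw [Finset.abs_prod, ← Finset.prod_const]
    refine Finset.prod_le_prod (fun _ _ => abs_nonneg _) fun i hi => ?_
    rw [zero_sub, abs_neg]
    exact abs_le.2 (hx i hi)
  have hderiv : |F T.card ξ| / T.card.factorial ≤ M / (3 * a) ^ T.card := by
    rw [div_le_iff₀ (by positivity)]
    exact (h.abs_le_factorial _ ξ hξ).trans_eq (by ring)
  rw [abs_mul, abs_div, Nat.abs_cast]
  calc |F T.card ξ| / T.card.factorial * |∏ i ∈ T, (0 - x i)|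
      ≤ M / (3 * a) ^ T.card * a ^ T.card := by gcongr
    _ = M * (3⁻¹ : ℝ) ^ T.card := by rw [mul_pow, inv_pow]; field_simp
    _ ≤ M * (Real.exp 1)⁻¹ ^ T.card := by gcongr; exact Real.exp_one_lt_three.le
    _ = M * Real.exp (-T.card) := by rw [inv_pow, Real.exp_one_pow, Real.exp_neg]

lemma card_zeros_le (h : IsCauchyBounded F a M) (ha : 0 < a) (h0 : F 0 0 ≠ 0)
    {S : Finset ℝ} (hS : ∀ t ∈ S, t ∈ Icc (-a) a ∧ F 0 t = 0) :
    (S.card : ℝ) ≤ Real.log (M / |F 0 0|) := by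
  have hM := h.pos ha h0
  obtain ⟨ξ, hξ, hval⟩ := h.isDerivSeqOn.exists_eq_eval_interpolate_add ordConnected_Icc
    (injOn_id _) (fun i hi => (hS i hi).1) (t := 0) ⟨by linarith, ha.le⟩
  have hinterp : (Lagrange.interpolate S id fun i => F 0 (id i)) = 0 := by
    rw [Lagrange.interpolate_apply]
    exact Finset.sum_eq_zero fun i hi => by
      rw [id, (hS i hi).2, Polynomial.C_0, zero_mul]
  rw [hinterp, Polynomial.eval_zero, zero_add] at hval
  have hle := h.abs_div_factorial_mul_prod_le ha hM.le (x := id) (fun i hi => (hS i hi).1) hξ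
  rw [← hval, Real.exp_neg, ← div_eq_mul_inv, le_div_iff₀ (Real.exp_pos _)] at hle
  rwa [Real.le_log_iff_exp_le (div_pos hM (abs_pos.2 h0)), le_div_iff₀ (abs_pos.2 h0), mul_comm]

lemma encard_zeros_le (h : IsCauchyBounded F a M) (ha : 0 < a) :
    ({t ∈ Icc (-a) a | F 0 t = 0}.encard : ℝ≥0∞) ≤ logGap M (F 0 0) := by
  rcases eq_or_ne (F 0 0) 0 with h0 | h0
  · rw [h0, logGap_zero]; exact le_top
  have hcard (S : Finset ℝ) (hS : ↑S ⊆ {t ∈ Icc (-a) a | F 0 t = 0}) :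
      (S.card : ℝ) ≤ Real.log (M / |F 0 0|) := h.card_zeros_le ha h0 fun _ hs => hS hs
  have hfin : {t ∈ Icc (-a) a | F 0 t = 0}.Finite := by
    by_contra hinf
    obtain ⟨S, hS, hc⟩ := Set.Infinite.exists_subset_card_eq hinf
      (⌊Real.log (M / |F 0 0|)⌋₊ + 1)
    have := hcard S hS
    rw [hc] at this
    exact this.not_gt (by exact_mod_cast Nat.lt_floor_add_one _)
  rw [logGap_of_ne_zero M h0, hfin.encard_eq_coe_toFinset_card, ENat.toENNReal_coe,
    ← ENNReal.ofReal_natCast]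
  exact ENNReal.ofReal_le_ofReal (hcard _ (by simp))

end IsCauchyBounded

lemma exists_gap_seq_of_isCompact {δ : ℝ} (hδ : 0 ≤ δ) {m : ℕ} :
    ∀ {E : Set ℝ}, IsCompact E → ENNReal.ofReal (m * δ) < volume E →
      ∃ x : ℕ → ℝ, (∀ i ≤ m, x i ∈ E) ∧ ∀ i < m, x i + δ ≤ x (i + 1) := by
  induction m with
  | zero =>
    intro E _ hvol
    obtain ⟨y, hy⟩ := nonempty_of_measure_ne_zero hvol.ne_bot
    exact ⟨fun _ => y, fun _ _ => hy, fun i hi => absurd hi i.not_lt_zero⟩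
  | succ m ih =>
    intro E hE hvol
    set y := sInf E
    have hyE : y ∈ E := hE.sInf_mem (nonempty_of_measure_ne_zero hvol.ne_bot)
    have hcov : E ⊆ Icc y (y + δ) ∪ (E ∩ Ici (y + δ)) := fun z hz =>
      (le_total z (y + δ)).imp (fun h => ⟨csInf_le hE.bddBelow hz, h⟩) fun h => ⟨hz, h⟩
    have hrest : ENNReal.ofReal (m * δ) < volume (E ∩ Ici (y + δ)) := by
      have h := hvol.trans_le ((measure_mono hcov).trans (measure_union_le _ _))
      rw [Real.volume_Icc, add_sub_cancel_left, Nat.cast_succ, add_one_mul, add_comm,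
        ENNReal.ofReal_add hδ (by positivity)] at h
      exact (ENNReal.add_lt_add_iff_left ENNReal.ofReal_ne_top).1 h
    obtain ⟨x, hx, hgap⟩ := ih (hE.inter_right isClosed_Ici) hrest
    refine ⟨fun | 0 => y | i + 1 => x i, ?_, ?_⟩
    · rintro (_ | i) hi
      exacts [hyE, (hx i (by lia)).1]
    · rintro (_ | i) hi
      exacts [(hx 0 m.zero_le).2, hgap i (by lia)]

lemma abs_natCast_sub_mul_le_abs_sub {x : ℕ → ℝ} {δ : ℝ} {m : ℕ}
    (hx : ∀ i < m, x i + δ ≤ x (i + 1)) {i j : ℕ} (hi : i ≤ m) (hj : j ≤ m) :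
    |(i : ℝ) - j| * δ ≤ |x i - x j| := by
  wlog hij : j ≤ i generalizing i j
  · rw [abs_sub_comm, abs_sub_comm (x i)]
    exact this hj hi (le_of_not_ge hij)
  have hmono : MonotoneOn (fun k : ℕ => x k - k * δ) (Iic m) :=
    monotoneOn_of_le_succ ordConnected_Iic fun k _ _ hk => by
      have := hx k (Order.succ_le_iff.1 hk)
      simp only [Order.succ_eq_add_one, Nat.cast_add_one]
      linarith
  have hle := hmono hj hi hij
  rw [abs_of_nonneg (sub_nonneg.2 (Nat.cast_le.2 hij))]
  exact le_trans (by linarith) (le_abs_self _)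

lemma prod_range_erase_abs_natCast_sub {m i : ℕ} (hi : i ≤ m) :
    ∏ j ∈ (Finset.range (m + 1)).erase i, |(i : ℝ) - j| = i.factorial * (m - i).factorial := by
  induction m, hi using Nat.le_induction with
  | base =>
    rw [Finset.range_add_one, Finset.erase_insert Finset.notMem_range_self, Nat.sub_self,
      Nat.factorial_zero, Nat.cast_one, mul_one, ← Finset.prod_range_reflect,
      ← Finset.prod_range_add_one_eq_factorial, Nat.cast_prod]
    refine Finset.prod_congr rfl fun j hj => ?_
    have hj := Finset.mem_range.1 hj
    rw [← Nat.cast_sub (by lia), Nat.abs_cast]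
    congr 1
    lia
  | succ m hm ih =>
    rw [Finset.range_add_one, Finset.erase_insert_of_ne (by lia), Finset.prod_insert (by simp), ih,
      Nat.succ_sub hm, Nat.factorial_succ, abs_sub_comm, ← Nat.cast_sub (by lia), Nat.abs_cast,
      Nat.succ_sub hm]
    push_cast
    ring

lemma sum_range_one_div_factorial_mul_factorial (m : ℕ) :
    ∑ i ∈ Finset.range (m + 1), (1 : ℝ) / (i.factorial * (m - i).factorial) =
      2 ^ m / m.factorial := by
  rw [eq_div_iff (by positivity), Finset.sum_mul]
  have h := congrArg (Nat.cast : ℕ → ℝ) (Nat.sum_range_choose m)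
  rw [Nat.cast_sum, Nat.cast_pow, Nat.cast_ofNat] at h
  rw [← h]
  refine Finset.sum_congr rfl fun i hi => ?_
  rw [Nat.cast_choose ℝ (Finset.mem_range_succ_iff.1 hi)]
  ring

section Interpolation

variable {m : ℕ} {x : ℕ → ℝ} {δ ρ t : ℝ}

lemma abs_eval_lagrangeBasis_le (hδ : 0 < δ) (hx : ∀ i < m, x i + δ ≤ x (i + 1))
    (ht : ∀ j ≤ m, |t - x j| ≤ ρ) {i : ℕ} (hi : i ≤ m) :
    |(Lagrange.basis (Finset.range (m + 1)) x i).eval t| ≤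
      (ρ / δ) ^ m * (1 / (i.factorial * (m - i).factorial)) := by
  have hcard : ((Finset.range (m + 1)).erase i).card = m := by
    rw [Finset.card_erase_of_mem (Finset.mem_range_succ_iff.2 hi), Finset.card_range,
      Nat.succ_sub_one]
  rw [Lagrange.basis, Polynomial.eval_prod, Finset.abs_prod]
  calc ∏ j ∈ (Finset.range (m + 1)).erase i, |(Lagrange.basisDivisor (x i) (x j)).eval t|
      ≤ ∏ j ∈ (Finset.range (m + 1)).erase i, ρ / δ * (1 / |(i : ℝ) - j|) := by
        refine Finset.prod_le_prod (fun _ _ => abs_nonneg _) fun j hj => ?_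
        have hjm : j ≤ m := Finset.mem_range_succ_iff.1 (Finset.mem_of_mem_erase hj)
        have hij : 0 < |(i : ℝ) - j| :=
          abs_pos.2 (sub_ne_zero.2 (Nat.cast_injective.ne (Finset.ne_of_mem_erase hj).symm))
        have hsep := abs_natCast_sub_mul_le_abs_sub hx hi hjm
        have : 0 ≤ ρ := (abs_nonneg _).trans (ht j hjm)
        simp only [Lagrange.basisDivisor, Polynomial.eval_mul, Polynomial.eval_C,
          Polynomial.eval_sub, Polynomial.eval_X, abs_mul, abs_inv]
        calc |x i - x j|⁻¹ * |t - x j| ≤ (|(i : ℝ) - j| * δ)⁻¹ * ρ := by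
              gcongr
              exact ht j hjm
          _ = ρ / δ * (1 / |(i : ℝ) - j|) := by field_simp
    _ = (ρ / δ) ^ m * (1 / (i.factorial * (m - i).factorial)) := by
        rw [Finset.prod_mul_distrib, Finset.prod_const, hcard, Finset.prod_div_distrib,
          prod_range_erase_abs_natCast_sub hi, Finset.prod_const_one]

lemma abs_eval_interpolate_le (hδ : 0 < δ) (hx : ∀ i < m, x i + δ ≤ x (i + 1))
    (ht : ∀ j ≤ m, |t - x j| ≤ ρ) {y : ℕ → ℝ} {ε : ℝ} (hy : ∀ i ≤ m, |y i| ≤ ε) :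
    |(Lagrange.interpolate (Finset.range (m + 1)) x y).eval t| ≤
      ε * (2 * ρ / δ) ^ m / m.factorial := by
  have hε : 0 ≤ ε := (abs_nonneg _).trans (hy 0 m.zero_le)
  rw [Lagrange.interpolate_apply, Polynomial.eval_finsetSum]
  calc _ ≤ ∑ i ∈ Finset.range (m + 1),
          |(Polynomial.C (y i) * Lagrange.basis (Finset.range (m + 1)) x i).eval t| :=
        Finset.abs_sum_le_sum_abs _ _
    _ ≤ ∑ i ∈ Finset.range (m + 1),
          ε * ((ρ / δ) ^ m * (1 / (i.factorial * (m - i).factorial))) := by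
        refine Finset.sum_le_sum fun i hi => ?_
        have him := Finset.mem_range_succ_iff.1 hi
        rw [Polynomial.eval_mul, Polynomial.eval_C, abs_mul]
        exact mul_le_mul (hy i him) (abs_eval_lagrangeBasis_le hδ hx ht him) (abs_nonneg _) hε
    _ = ε * (2 * ρ / δ) ^ m / m.factorial := by
        rw [← Finset.mul_sum, ← Finset.mul_sum, sum_range_one_div_factorial_mul_factorial,
          mul_div_assoc 2, mul_pow 2]
        ring

end Interpolation

/-! ### Integrating the logarithmic gap along an interval -/

namespace IsCauchyBounded

variable {F : ℕ → ℝ → ℝ} {a M : ℝ}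

lemma abs_zero_le_of_gap_seq (h : IsCauchyBounded F a M) (ha : 0 < a) (hM : 0 ≤ M)
    {m : ℕ} {δ ε : ℝ} (hδ : 0 < δ) {x : ℕ → ℝ}
    (hx : ∀ i ≤ m, x i ∈ Icc (-a) a ∧ |F 0 (x i)| ≤ ε) (hgap : ∀ i < m, x i + δ ≤ x (i + 1)) :
    |F 0 0| ≤ ε * (2 * a / δ) ^ m / m.factorial + M * Real.exp (-(m + 1 : ℕ)) := by
  have hrange {i : ℕ} (hi : i ∈ Finset.range (m + 1)) := hx i (Finset.mem_range_succ_iff.1 hi)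
  have hinj : Set.InjOn x (Finset.range (m + 1)) := by
    intro i hi j hj hij
    have hle := abs_natCast_sub_mul_le_abs_sub hgap
      (Finset.mem_range_succ_iff.1 hi) (Finset.mem_range_succ_iff.1 hj)
    rw [hij, sub_self, abs_zero] at hle
    have h0 := abs_nonpos_iff.1 (nonpos_of_mul_nonpos_left hle hδ)
    exact Nat.cast_injective (sub_eq_zero.1 h0)
  obtain ⟨ξ, hξ, hval⟩ := h.isDerivSeqOn.exists_eq_eval_interpolate_add ordConnected_Icc hinj
    (fun i hi => (hrange hi).1) (t := 0) ⟨by linarith, ha.le⟩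
  have hrem := h.abs_div_factorial_mul_prod_le ha hM (fun i hi => (hrange hi).1) hξ
  have hinterp := abs_eval_interpolate_le hδ hgap (t := 0) (ρ := a)
    (fun j hj => by rw [zero_sub, abs_neg]; exact abs_le.2 (hx j hj).1) fun i hi => (hx i hi).2
  rw [hval]
  rw [Finset.card_range] at hrem ⊢
  exact (abs_add_le _ _).trans (add_le_add hinterp hrem)

end IsCauchyBounded

lemma lintegral_exp_neg_div {m : ℝ} (hm : 0 < m) :
    ∫⁻ s in Ioi (0 : ℝ), ENNReal.ofReal (Real.exp (-s / m)) = ENNReal.ofReal m := by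
  have hneg : -m⁻¹ < 0 := neg_neg_of_pos (inv_pos.2 hm)
  simp_rw [show ∀ s : ℝ, -s / m = -m⁻¹ * s from fun s => by ring]
  rw [← ofReal_integral_eq_lintegral_ofReal (integrableOn_exp_mul_Ioi hneg 0)
    (ae_of_all _ fun s => (Real.exp_pos _).le), integral_exp_mul_Ioi hneg]
  simp

lemma succ_mul_exp_pow_div_factorial_le (s : ℝ) {m : ℕ} (hm : m ≠ 0) :
    ((m + 1) * Real.exp (s / m - 4)) ^ m / m.factorial ≤ Real.exp (1 - 3 * m + s) := by
  rw [mul_pow, mul_div_right_comm, ← Real.exp_nat_mul]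
  calc ((m : ℝ) + 1) ^ m / m.factorial * Real.exp (m * (s / m - 4))
      ≤ Real.exp (m + 1) * Real.exp (m * (s / m - 4)) := by
        gcongr
        exact Real.pow_div_factorial_le_exp _ (by positivity) m
    _ = Real.exp (1 - 3 * m + s) := by
        rw [← Real.exp_add]
        congr 1
        field_simp
        ring

section LayerCake

variable {α : Type*} [MeasurableSpace α] {μ : Measure α} {f : α → ℝ} {M B m : ℝ}

lemma ae_ne_zero_of_measure_sublevel_le (hM : 0 ≤ M) (hm : 0 < m)
    (hsub : ∀ s > 0, μ {x | |f x| ≤ M * Real.exp (-s)} ≤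
      ENNReal.ofReal (B * Real.exp (-s / m))) : ∀ᵐ x ∂μ, f x ≠ 0 := by
  have hlim : Tendsto (fun s => ENNReal.ofReal (B * Real.exp (-s / m))) atTop (𝓝 0) := by
    have := (Real.tendsto_exp_neg_atTop_nhds_zero.comp
      (tendsto_id.atTop_div_const hm)).const_mul B
    simp only [mul_zero, Function.comp_def, id, ← neg_div] at this
    simpa using ENNReal.tendsto_ofReal this
  have hzero : ∀ᶠ s in atTop, μ {x | f x = 0} ≤ ENNReal.ofReal (B * Real.exp (-s / m)) := by
    filter_upwards [eventually_gt_atTop 0] with s hs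
    refine (measure_mono fun x hx => ?_).trans (hsub s hs)
    rw [mem_ofPred_eq] at hx ⊢
    rw [hx, abs_zero]
    positivity
  simpa [ae_iff] using nonpos_iff_eq_zero.1 (ge_of_tendsto hlim hzero)

lemma lintegral_logGap_le_of_measure_sublevel_le (hf : AEMeasurable f μ) (hM : 0 ≤ M)
    (hB : 0 ≤ B) (hm : 0 < m)
    (hsub : ∀ s > 0, μ {x | |f x| ≤ M * Real.exp (-s)} ≤
      ENNReal.ofReal (B * Real.exp (-s / m))) :
    ∫⁻ x, logGap M (f x) ∂μ ≤ ENNReal.ofReal (B * m) := by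
  have hmeas : AEMeasurable (fun x => max (Real.log (M / |f x|)) 0) μ :=
    (Real.measurable_log.comp_aemeasurable
      (aemeasurable_const.div (measurable_norm.comp_aemeasurable hf))).max aemeasurable_const
  have hae : ∀ᵐ x ∂μ, logGap M (f x) = ENNReal.ofReal (max (Real.log (M / |f x|)) 0) := by
    filter_upwards [ae_ne_zero_of_measure_sublevel_le hM hm hsub] with x hx
    rw [logGap_of_ne_zero M hx, ENNReal.ofReal_max, ENNReal.ofReal_zero, max_eq_left zero_le]
  have hlevel {s : ℝ} (hs : 0 < s) :
      {x | s ≤ max (Real.log (M / |f x|)) 0} ⊆ {x | |f x| ≤ M * Real.exp (-s)} := by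
    intro x hx
    have hlog : s ≤ Real.log (M / |f x|) := (le_max_iff.1 hx).resolve_right hs.not_ge
    rcases eq_or_ne (f x) 0 with h0 | h0
    · rw [mem_ofPred_eq, h0, abs_zero]
      positivity
    have hMf : 0 < M / |f x| :=
      (div_nonneg hM (abs_nonneg _)).lt_of_ne fun h => by
        rw [← h, Real.log_zero] at hlog
        exact hs.not_ge hlog
    rw [Real.le_log_iff_exp_le hMf, le_div_iff₀ (abs_pos.2 h0)] at hlog
    rwa [mem_ofPred_eq, Real.exp_neg, ← div_eq_mul_inv, le_div_iff₀' (Real.exp_pos _)]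
  rw [lintegral_congr_ae hae,
    lintegral_eq_lintegral_meas_le μ (f := fun x => max (Real.log (M / |f x|)) 0)
      (ae_of_all _ fun _ => le_max_right _ _) hmeas]
  calc _ ≤ ∫⁻ s in Ioi (0 : ℝ), ENNReal.ofReal B * ENNReal.ofReal (Real.exp (-s / m)) := by
        refine setLIntegral_mono' measurableSet_Ioi fun s hs => ?_
        rw [← ENNReal.ofReal_mul hB]
        exact (measure_mono (hlevel hs)).trans (hsub s hs)
    _ = ENNReal.ofReal (B * m) := by
        rw [lintegral_const_mul _ (by fun_prop), lintegral_exp_neg_div hm, ENNReal.ofReal_mul hB]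

end LayerCake

lemma mul_exp_neg_log_div {M b : ℝ} (hM : 0 < M) (hb : 0 < b) :
    M * Real.exp (-Real.log (M / b)) = b := by
  rw [← Real.log_inv, inv_div, Real.exp_log (div_pos hb hM), mul_div_cancel₀ _ hM.ne']

namespace IsCauchyBounded

variable {F : ℕ → ℝ → ℝ} {a M : ℝ}

lemma isCompact_sublevel (h : IsCauchyBounded F a M) (c : ℝ) :
    IsCompact {t ∈ Icc (-a) a | |F 0 t| ≤ c} :=
  isCompact_Icc.of_isClosed_subset
    ((h.isDerivSeqOn.continuousOn 0).abs.preimage_isClosed_of_isClosed isClosed_Icc isClosed_Iic)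
    fun _ ht => ht.1

lemma log_div_abs_nonneg (h : IsCauchyBounded F a M) (ha : 0 < a) (h0 : F 0 0 ≠ 0) :
    0 ≤ Real.log (M / |F 0 0|) :=
  Real.log_nonneg ((one_le_div (abs_pos.2 h0)).2 (h.abs_zero_le ⟨by linarith, ha.le⟩))

/- A Remez type inequality: if the sublevel set were larger, it would contain `m + 1` points so
well separated that interpolation at them would force `|F 0 0|` to be smaller than it is. -/
lemma volume_sublevel_le (h : IsCauchyBounded F a M) (ha : 0 < a) (h0 : F 0 0 ≠ 0)
    {m : ℕ} (hm : Real.log (M / |F 0 0|) + 1 ≤ m) (s : ℝ) :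
    volume {t ∈ Icc (-a) a | |F 0 t| ≤ M * Real.exp (-s)} ≤
      ENNReal.ofReal (2 * a * Real.exp 4 * Real.exp (-s / m)) := by
  have hM := h.pos ha h0
  have hA0 := h.log_div_abs_nonneg ha h0
  set A := Real.log (M / |F 0 0|)
  have hF0 : M * Real.exp (-A) = |F 0 0| := mul_exp_neg_log_div hM (abs_pos.2 h0)
  have hm1 : (1 : ℝ) ≤ m := by linarith
  have hm0 : m ≠ 0 := Nat.one_le_iff_ne_zero.1 (Nat.one_le_cast.1 hm1)
  by_contra! hvol
  set δ := 2 * a * Real.exp 4 * Real.exp (-s / m) / (m + 1) with hδ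
  have hδ0 : 0 < δ := by positivity
  obtain ⟨x, hx, hgap⟩ := exists_gap_seq_of_isCompact hδ0.le (m := m) (h.isCompact_sublevel _)
    (hvol.trans_le' (ENNReal.ofReal_le_ofReal (by
      rw [hδ, ← mul_div_assoc, div_le_iff₀ (by positivity), mul_comm]
      gcongr
      linarith)))
  have hratio : 2 * a / δ = (m + 1) * Real.exp (s / m - 4) := by
    rw [hδ, Real.exp_sub, neg_div, Real.exp_neg]
    field_simp
  have hlarge : M * Real.exp (-s) * (2 * a / δ) ^ m / m.factorial ≤ |F 0 0| * Real.exp (-1) := by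
    calc _ = M * Real.exp (-s) * ((2 * a / δ) ^ m / m.factorial) := by ring
      _ ≤ M * Real.exp (-s) * Real.exp (1 - 3 * m + s) := by
          gcongr
          rw [hratio]
          exact succ_mul_exp_pow_div_factorial_le s hm0
      _ = M * Real.exp (1 - 3 * m) := by rw [mul_assoc, ← Real.exp_add]; congr 2; ring
      _ ≤ M * Real.exp (-A + -1) := by gcongr; linarith
      _ = |F 0 0| * Real.exp (-1) := by rw [Real.exp_add, ← mul_assoc, hF0]
  have hsmall : M * Real.exp (-(m + 1 : ℕ)) ≤ |F 0 0| * Real.exp (-1) := by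
    rw [← hF0, mul_assoc, ← Real.exp_add]
    gcongr
    push_cast
    linarith
  have hkey := h.abs_zero_le_of_gap_seq ha hM.le hδ0 hx hgap
  have hexp : Real.exp (-1) < 1 / 2 := by
    rw [Real.exp_neg, ← one_div]
    exact one_div_lt_one_div_of_lt two_pos (by linarith [Real.exp_one_gt_d9])
  nlinarith [abs_pos.2 h0]

end IsCauchyBounded

/-- The constant of the one-dimensional estimate `IsCauchyBounded.lintegral_one_add_logGap_le`. -/
def lineConst : ℝ := 2 + 4 * Real.exp 4

lemma lineConst_pos : 0 < lineConst := by unfold lineConst; positivity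

lemma IsCauchyBounded.lintegral_one_add_logGap_le {F : ℕ → ℝ → ℝ} {a M : ℝ}
    (h : IsCauchyBounded F a M) (ha : 0 < a) :
    ∫⁻ t in Icc (-a) a, (1 + logGap M (F 0 t)) ≤
      ENNReal.ofReal (lineConst * a) * (1 + logGap M (F 0 0)) := by
  rcases eq_or_ne (F 0 0) 0 with h0 | h0
  · rw [h0, logGap_zero, add_top, ENNReal.mul_top
      (ENNReal.ofReal_pos.2 (mul_pos lineConst_pos ha)).ne']
    exact le_top
  set A := Real.log (M / |F 0 0|) with hA
  have hA0 : 0 ≤ A := h.log_div_abs_nonneg ha h0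
  have hm : ((⌈A⌉₊ + 1 : ℕ) : ℝ) ≤ A + 2 := by
    push_cast
    linarith [Nat.ceil_lt_add_one hA0]
  have hgap : ∫⁻ t in Icc (-a) a, logGap M (F 0 t) ≤
      ENNReal.ofReal (2 * a * Real.exp 4 * (⌈A⌉₊ + 1 : ℕ)) := by
    refine lintegral_logGap_le_of_measure_sublevel_le
      ((h.isDerivSeqOn.continuousOn 0).aemeasurable measurableSet_Icc) (h.pos ha h0).le
      (by positivity) (by positivity) fun s _ => ?_
    rw [Measure.restrict_apply' measurableSet_Icc, inter_comm]
    exact h.volume_sublevel_le ha h0 (by push_cast; linarith [Nat.le_ceil A]) s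
  rw [lintegral_add_left measurable_const, setLIntegral_one, Real.volume_Icc,
    logGap_of_ne_zero M h0, ← hA, ← ENNReal.ofReal_one, ← ENNReal.ofReal_add zero_le_one hA0,
    ← ENNReal.ofReal_mul (mul_pos lineConst_pos ha).le]
  refine (add_le_add_right hgap _).trans ?_
  rw [← ENNReal.ofReal_add (by linarith) (by positivity)]
  apply ENNReal.ofReal_le_ofReal
  calc a - -a + 2 * a * Real.exp 4 * (⌈A⌉₊ + 1 : ℕ)
      ≤ a - -a + 2 * a * Real.exp 4 * (A + 2) := by gcongr
    _ ≤ lineConst * a * (1 + A) := by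
        have : 0 ≤ a * A := by positivity
        have : 0 ≤ a * A * Real.exp 4 := by positivity
        unfold lineConst
        linarith

/-! ### Weighted means of harmonic functions -/

lemma hasDerivAt_max_zero_pow (k : ℕ) (s : ℝ) :
    HasDerivAt (fun s : ℝ => max s 0 ^ (k + 2)) ((k + 2) * max s 0 ^ (k + 1)) s := by
  refine hasDerivAt_of_hasDerivAt_of_ne' (x := 0) (g := fun s => (k + 2) * max s 0 ^ (k + 1))
    (fun t ht => ?_) (by fun_prop) (by fun_prop) s
  rcases ht.lt_or_gt with ht | ht
  · have hzero : (fun s : ℝ => max s 0 ^ (k + 2)) =ᶠ[𝓝 t] fun _ => 0 := by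
      filter_upwards [Iio_mem_nhds ht] with s hs
      simp [max_eq_right (le_of_lt (mem_Iio.1 hs))]
    simpa [max_eq_right ht.le] using (hasDerivAt_const t (0 : ℝ)).congr_of_eventuallyEq hzero
  · have hpow : (fun s : ℝ => max s 0 ^ (k + 2)) =ᶠ[𝓝 t] fun s => s ^ (k + 2) := by
      filter_upwards [Ioi_mem_nhds ht] with s hs
      rw [max_eq_left (le_of_lt hs)]
    simpa [max_eq_left ht.le, add_assoc] using
      (hasDerivAt_pow (k + 2) t).congr_of_eventuallyEq hpow

lemma contDiff_max_zero_pow (k : ℕ) : ContDiff ℝ 1 (fun s : ℝ => max s 0 ^ (k + 2)) := by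
  rw [contDiff_one_iff_deriv]
  refine ⟨fun s => (hasDerivAt_max_zero_pow k s).differentiableAt, ?_⟩
  rw [show deriv (fun s : ℝ => max s 0 ^ (k + 2)) = fun s : ℝ => (k + 2) * max s 0 ^ (k + 1) from
    funext fun s => (hasDerivAt_max_zero_pow k s).deriv]
  fun_prop

section Kernel

variable {E : Type*} [NormedAddCommGroup E]

/-- The radial weight `(1 - ‖y‖²)₊²` of the mean values used below. A polynomial profile is
chosen because `meanKernel y • y` is then an explicit gradient, that of `meanPotential`. -/
def meanKernel (y : E) : ℝ := max (1 - ‖y‖ ^ 2) 0 ^ 2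

/-- The function with gradient `meanKernel y • y`. -/
def meanPotential (y : E) : ℝ := -(1 / 6) * max (1 - ‖y‖ ^ 2) 0 ^ 3

lemma max_one_sub_norm_sq_eq_zero {y : E} (hy : 1 ≤ ‖y‖) : max (1 - ‖y‖ ^ 2) 0 = 0 :=
  max_eq_right (by nlinarith)

lemma meanKernel_eq_zero {y : E} (hy : 1 ≤ ‖y‖) : meanKernel y = 0 := by
  simp [meanKernel, max_one_sub_norm_sq_eq_zero hy]

lemma meanPotential_eq_zero {y : E} (hy : 1 ≤ ‖y‖) : meanPotential y = 0 := by
  simp [meanPotential, max_one_sub_norm_sq_eq_zero hy]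

lemma meanKernel_nonneg (y : E) : 0 ≤ meanKernel y := sq_nonneg _

lemma tsupport_meanKernel_subset : tsupport (meanKernel : E → ℝ) ⊆ closedBall 0 1 := by
  refine closure_minimal (fun y hy => ?_) isClosed_closedBall
  rw [mem_closedBall_zero_iff]
  by_contra! hlt
  exact hy (meanKernel_eq_zero hlt.le)

variable [InnerProductSpace ℝ E]

lemma contDiff_meanKernel : ContDiff ℝ 1 (meanKernel : E → ℝ) :=
  (contDiff_max_zero_pow 0).comp (contDiff_const.sub (contDiff_norm_sq ℝ))

lemma contDiff_meanPotential : ContDiff ℝ 1 (meanPotential : E → ℝ) :=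
  contDiff_const.mul ((contDiff_max_zero_pow 1).comp (contDiff_const.sub (contDiff_norm_sq ℝ)))

lemma fderiv_meanPotential_apply (y v : E) :
    fderiv ℝ meanPotential y v = meanKernel y * ⟪y, v⟫ := by
  have hnorm : HasFDerivAt (fun y : E => 1 - ‖y‖ ^ 2) (-(2 • (innerSL ℝ y))) y :=
    (hasStrictFDerivAt_norm_sq y).hasFDerivAt.const_sub 1
  have hpot : HasFDerivAt (meanPotential : E → ℝ) _ y :=
    ((hasDerivAt_max_zero_pow 1 (1 - ‖y‖ ^ 2)).comp_hasFDerivAt y hnorm).const_mul (-(1 / 6) : ℝ)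
  rw [hpot.fderiv]
  simp [meanKernel]
  ring

variable [FiniteDimensional ℝ E]

lemma hasCompactSupport_meanKernel : HasCompactSupport (meanKernel : E → ℝ) :=
  (isCompact_closedBall (0 : E) 1).of_isClosed_subset (isClosed_tsupport _)
    tsupport_meanKernel_subset

lemma hasCompactSupport_meanPotential : HasCompactSupport (meanPotential : E → ℝ) :=
  HasCompactSupport.intro (isCompact_closedBall (0 : E) 1) fun _ hy =>
    meanPotential_eq_zero (not_le.1 (mt mem_closedBall_zero_iff.2 hy)).le

variable [MeasurableSpace E] [BorelSpace E]

variable (E) in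
/-- The total weight `∫ (1 - ‖y‖²)₊²` of `meanKernel`. -/
def kernelMass : ℝ := ∫ y : E, meanKernel y

lemma kernelMass_pos : 0 < kernelMass E :=
  contDiff_meanKernel.continuous.integral_pos_of_hasCompactSupport_nonneg_nonzero
    hasCompactSupport_meanKernel meanKernel_nonneg (x := 0) (by simp [meanKernel])

end Kernel

section Calculus

variable {E : Type*} [NormedAddCommGroup E]

lemma add_smul_mem_closedBall [NormedSpace ℝ E] {x y : E} {R : ℝ} (hR : 0 ≤ R) (hy : ‖y‖ ≤ 1) :
    x + R • y ∈ closedBall x R := by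
  rw [mem_closedBall, dist_self_add_left, norm_smul, Real.norm_of_nonneg hR]
  exact mul_le_of_le_one_right hR hy

lemma exists_contDiff_hasCompactSupport_eqOn [InnerProductSpace ℝ E] [FiniteDimensional ℝ E]
    {k : ℕ∞} {u : E → ℝ} {Ω : Set E} (hΩ : IsOpen Ω) (hu : ContDiffOn ℝ k u Ω) {x : E} {r : ℝ}
    (hr : 0 ≤ r) (hsub : closedBall x r ⊆ Ω) :
    ∃ δ > 0, closedBall x (r + δ) ⊆ Ω ∧
      ∃ w : E → ℝ, ContDiff ℝ k w ∧ HasCompactSupport w ∧ EqOn w u (closedBall x (r + δ)) := by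
  obtain ⟨δ, hδ, hδΩ⟩ := (isCompact_closedBall x r).exists_cthickening_subset_open hΩ hsub
  rw [cthickening_closedBall hδ.le hr] at hδΩ
  let f : ContDiffBump x := ⟨r + δ / 2, r + δ, by positivity, by linarith⟩
  refine ⟨δ / 2, half_pos hδ, (closedBall_subset_closedBall (by linarith)).trans hδΩ,
    fun y => f y * u y, ?_, f.hasCompactSupport.mul_right, fun y hy => ?_⟩
  · refine contDiff_iff_contDiffAt.2 fun y => ?_
    by_cases hy : y ∈ tsupport f
    · rw [f.tsupport_eq] at hy
      exact f.contDiff.contDiffAt.mul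
        (hu.contDiffAt (hΩ.mem_nhds (hδΩ (by rwa [add_comm]))))
    · refine (contDiffAt_const (c := 0)).congr_of_eventuallyEq ?_
      filter_upwards [(isClosed_tsupport f).isOpen_compl.mem_nhds hy] with z hz
      rw [image_eq_zero_of_notMem_tsupport hz, zero_mul]
  · simp [f.one_of_mem_closedBall hy]

variable [NormedSpace ℝ E] [MeasurableSpace E] [BorelSpace E] {μ : Measure E}

lemma hasDerivAt_integral_comp_add_smul_mul [IsFiniteMeasureOnCompacts μ]
    {w k : E → ℝ} (hw : ContDiff ℝ 1 w) (hwc : HasCompactSupport w)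
    (hk : Continuous k) (hkc : HasCompactSupport k) {a b : E → E} (ha : Continuous a)
    (hb : Continuous b) (t : ℝ) :
    HasDerivAt (fun t : ℝ => ∫ y, w (a y + t • b y) * k y ∂μ)
      (∫ y, fderiv ℝ w (a y + t • b y) (b y) * k y ∂μ) t := by
  have hdw : Continuous (fderiv ℝ w) := hw.continuous_fderiv one_ne_zero
  have hwcont : Continuous w := hw.continuous
  obtain ⟨C, hC⟩ := hdw.bounded_above_of_compact_support (hwc.fderiv ℝ)
  refine (hasDerivAt_integral_of_dominated_loc_of_deriv_le (s := univ)
    (F := fun t y => w (a y + t • b y) * k y)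
    (F' := fun t y => fderiv ℝ w (a y + t • b y) (b y) * k y)
    (bound := fun y => C * ‖b y‖ * ‖k y‖) univ_mem ?_ ?_ ?_ ?_ ?_ ?_).2
  · refine Eventually.of_forall fun t => ?_
    exact Continuous.aestronglyMeasurable (by fun_prop)
  · exact Continuous.integrable_of_hasCompactSupport (by fun_prop) hkc.mul_left
  · exact Continuous.aestronglyMeasurable (by fun_prop)
  · refine ae_of_all _ fun y t _ => ?_
    rw [norm_mul]
    gcongr
    exact (fderiv ℝ w (a y + t • b y)).le_of_opNorm_le (hC _) _
  · exact Continuous.integrable_of_hasCompactSupport (by fun_prop) hkc.norm.mul_left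
  · refine ae_of_all _ fun y t _ => ?_
    have hline : HasDerivAt (fun t : ℝ => a y + t • b y) (b y) t := by
      simpa using ((hasDerivAt_id t).smul_const (b y)).const_add (a y)
    exact ((hw.differentiable one_ne_zero _).hasFDerivAt.comp_hasDerivAt t hline).mul_const (k y)

variable [FiniteDimensional ℝ E] [μ.IsAddHaarMeasure]

lemma integral_comp_add_smul_mul_fderiv {g k : E → ℝ} (hg : ContDiff ℝ 1 g)
    (hk : ContDiff ℝ 1 k) (hkc : HasCompactSupport k) (x v : E) (ε : ℝ) :
    ∫ y, g (x + ε • y) * fderiv ℝ k y v ∂μ =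
      -(ε * ∫ y, fderiv ℝ g (x + ε • y) v * k y ∂μ) := by
  have hgcont : Continuous g := hg.continuous
  have hkcont : Continuous k := hk.continuous
  have : Continuous (fderiv ℝ g) := hg.continuous_fderiv one_ne_zero
  have : Continuous (fderiv ℝ k) := hk.continuous_fderiv one_ne_zero
  have hcomp : ∀ y, HasFDerivAt (fun y => g (x + ε • y)) (ε • fderiv ℝ g (x + ε • y)) y := by
    intro y
    have haff : HasFDerivAt (fun y : E => x + ε • y) (ε • ContinuousLinearMap.id ℝ E) y :=
      ((hasFDerivAt_id y).const_smul ε).const_add x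
    convert! (hg.differentiable one_ne_zero (x + ε • y)).hasFDerivAt.comp y haff using 1
    ext z
    simp
  have hval : ∀ y, fderiv ℝ (fun y => g (x + ε • y)) y v * k y =
      ε * (fderiv ℝ g (x + ε • y) v * k y) := fun y => by
    rw [(hcomp y).fderiv, smul_apply, smul_eq_mul, mul_assoc]
  rw [integral_mul_fderiv_eq_neg_fderiv_mul_of_integrable]
  · simp_rw [hval, integral_const_mul]
  · simp_rw [hval]
    exact (Continuous.integrable_of_hasCompactSupport (by fun_prop) hkc.mul_left).const_mul ε
  · exact Continuous.integrable_of_hasCompactSupport (by fun_prop) (hkc.fderiv_apply ℝ v).mul_left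
  · exact Continuous.integrable_of_hasCompactSupport (by fun_prop) hkc.mul_left
  · exact fun y _ => (hcomp y).differentiableAt
  · exact fun y _ => hk.differentiable one_ne_zero y

open scoped Convolution in
lemma contDiff_integral_comp_add_smul_mul {n : ℕ∞} {w k : E → ℝ} (hw : Continuous w)
    (hk : ContDiff ℝ n k) (hkc : HasCompactSupport k) {R : ℝ} (hR : R ≠ 0) :
    ContDiff ℝ n fun x => ∫ y, w (x + R • y) * k y ∂μ := by
  have hconv : ContDiff ℝ n ((fun y => k (-y)) ⋆[ContinuousLinearMap.mul ℝ ℝ, μ]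
      fun y => w (R • y)) :=
    (hkc.comp_homeomorph (Homeomorph.neg E)).contDiff_convolution_left _ (hk.comp contDiff_neg)
      (by fun_prop : Continuous fun y => w (R • y)).locallyIntegrable
  convert! hconv.comp (contDiff_const_smul R⁻¹) using 1
  ext x
  rw [Function.comp_apply, convolution_def,
    ← integral_neg_eq_self fun y => w (x + R • y) * k y]
  simp only [ContinuousLinearMap.mul_apply', smul_sub, smul_inv_smul₀ hR, smul_neg,
    ← sub_eq_add_neg, mul_comm]

end Calculus

/-! ### The mean value property and its consequences -/

/-- `u` is continuous on `Ω` and has there the mean value property for the weight `meanKernel`.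
Harmonic functions have it, and it passes to directional derivatives, so that the Laplacian plays
no role once it is established. -/
structure HasKernelMeanOn {E : Type*} [NormedAddCommGroup E] [InnerProductSpace ℝ E]
    [FiniteDimensional ℝ E] [MeasurableSpace E] [BorelSpace E] (u : E → ℝ) (Ω : Set E) : Prop where
  continuousOn : ContinuousOn u Ω
  integral_eq : ∀ (x : E) (R : ℝ), 0 < R → closedBall x R ⊆ Ω →
    ∫ y, u (x + R • y) * meanKernel y = kernelMass E * u x

section Means

variable {E : Type*} [NormedAddCommGroup E] [MeasurableSpace E] {μ : Measure E}

lemma integral_mul_meanKernel_congr {f g : E → ℝ} (h : ∀ y, ‖y‖ ≤ 1 → f y = g y) :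
    ∫ y, f y * meanKernel y ∂μ = ∫ y, g y * meanKernel y ∂μ := by
  congr 1 with y
  rcases le_total 1 ‖y‖ with hy | hy
  · simp only [meanKernel_eq_zero hy, mul_zero]
  · rw [h y hy]

lemma integral_mul_meanKernel_congr_of_eqOn [NormedSpace ℝ E] {u w : E → ℝ} {x : E} {R : ℝ}
    (hR : 0 ≤ R) (h : EqOn w u (closedBall x R)) :
    ∫ y, w (x + R • y) * meanKernel y ∂μ = ∫ y, u (x + R • y) * meanKernel y ∂μ :=
  integral_mul_meanKernel_congr fun _ hy => h (add_smul_mem_closedBall hR hy)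

end Means

section Harmonic

variable {d : ℕ} {u w : Euc d → ℝ} {x : Euc d}

lemma laplacian_congr (h : w =ᶠ[𝓝 x] u) : laplacian w x = laplacian u x := by
  refine Finset.sum_congr rfl fun i _ => ?_
  have hpartial : (fun y => fderiv ℝ w y (EuclideanSpace.single i 1)) =ᶠ[𝓝 x]
      fun y => fderiv ℝ u y (EuclideanSpace.single i 1) := by
    filter_upwards [h.eventuallyEq_nhds] with y hy
    rw [hy.fderiv_eq]
  rw [hpartial.fderiv_eq]

lemma fderiv_apply_mul_meanKernel (y z : Euc d) :
    fderiv ℝ w z y * meanKernel y = ∑ i, fderiv ℝ w z (EuclideanSpace.single i 1) *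
      fderiv ℝ meanPotential y (EuclideanSpace.single i 1) := by
  have hy : y = ∑ i, y i • EuclideanSpace.single i (1 : ℝ) := by
    ext j
    simp [Finset.sum_apply, Pi.single_apply]
  conv_lhs => rw [hy, map_sum, ← hy, Finset.sum_mul]
  refine Finset.sum_congr rfl fun i _ => ?_
  rw [map_smul, fderiv_meanPotential_apply, EuclideanSpace.inner_single_right]
  simp only [smul_eq_mul, conj_trivial, one_mul]
  ring

lemma integral_fderiv_mul_meanKernel (hw : ContDiff ℝ 2 w) (x : Euc d) (ε : ℝ) :
    ∫ y, fderiv ℝ w (x + ε • y) y * meanKernel y =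
      -(ε * ∫ y, laplacian w (x + ε • y) * meanPotential y) := by
  have hpartial : ∀ i, ContDiff ℝ 1 fun z => fderiv ℝ w z (EuclideanSpace.single i 1) := fun i =>
    (hw.fderiv_right (m := 1) (by norm_num)).clm_apply contDiff_const
  have hparts := fun i => integral_comp_add_smul_mul_fderiv (μ := volume) (hpartial i)
    contDiff_meanPotential hasCompactSupport_meanPotential x (EuclideanSpace.single i 1) ε
  have hpot : Continuous (meanPotential : Euc d → ℝ) := contDiff_meanPotential.continuous
  simp_rw [fderiv_apply_mul_meanKernel, laplacian, Finset.sum_mul]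
  rw [integral_finsetSum, integral_finsetSum, Finset.mul_sum, ← Finset.sum_neg_distrib]
  · exact Finset.sum_congr rfl fun i _ => hparts i
  · refine fun i _ => Continuous.integrable_of_hasCompactSupport ?_
      hasCompactSupport_meanPotential.mul_left
    have := (hpartial i).continuous_fderiv one_ne_zero
    fun_prop
  · refine fun i _ => Continuous.integrable_of_hasCompactSupport ?_
      (hasCompactSupport_meanPotential.fderiv_apply ℝ _).mul_left
    have := (hpartial i).continuous
    have := contDiff_meanPotential (E := Euc d) |>.continuous_fderiv one_ne_zero
    fun_prop

lemma integral_fderiv_mul_meanKernel_eq_zero (hw : ContDiff ℝ 2 w) {ε : ℝ} (hε : 0 ≤ ε)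
    (hlap : ∀ z ∈ closedBall x ε, laplacian w z = 0) :
    ∫ y, fderiv ℝ w (x + ε • y) y * meanKernel y = 0 := by
  have hzero : ∀ y : Euc d, laplacian w (x + ε • y) * meanPotential y = 0 := fun y => by
    rcases le_total 1 ‖y‖ with hy | hy
    · rw [meanPotential_eq_zero hy, mul_zero]
    · rw [hlap _ (add_smul_mem_closedBall hε hy), zero_mul]
  simp [integral_fderiv_mul_meanKernel hw, hzero]

lemma HarmonicOn.hasKernelMeanOn {h : Euc d → ℝ} {Ω : Set (Euc d)} (hΩ : IsOpen Ω)
    (hh : HarmonicOn h Ω) : HasKernelMeanOn h Ω := by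
  refine ⟨hh.1.continuousOn, fun x R hR hsub => ?_⟩
  obtain ⟨δ, hδ, hδΩ, w, hw, hwc, hwh⟩ :=
    exists_contDiff_hasCompactSupport_eqOn (k := 2) hΩ hh.1 hR.le hsub
  have hlap : ∀ z ∈ ball x (R + δ), laplacian w z = 0 := fun z hz => by
    have hloc : w =ᶠ[𝓝 z] h :=
      (hwh.mono ball_subset_closedBall).eventuallyEq_of_mem (isOpen_ball.mem_nhds hz)
    rw [laplacian_congr hloc, hh.2 z (hδΩ (ball_subset_closedBall hz))]
  have hderiv : ∀ t ∈ Icc 0 R, HasDerivAt (fun t : ℝ => ∫ y, w (x + t • y) * meanKernel y) 0 t := by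
    intro t ht
    have hzero := integral_fderiv_mul_meanKernel_eq_zero (hw : ContDiff ℝ 2 w) ht.1 fun z hz =>
      hlap z (closedBall_subset_ball (by linarith [ht.2]) hz)
    rw [← hzero]
    exact hasDerivAt_integral_comp_add_smul_mul (a := fun _ => x) (b := id)
      (hw.of_le (by norm_num)) hwc contDiff_meanKernel.continuous hasCompactSupport_meanKernel
      continuous_const continuous_id t
  have hconst := constant_of_has_deriv_right_zero
    (fun t ht => (hderiv t ht).continuousAt.continuousWithinAt)
    (fun t ht => (hderiv t (Ico_subset_Icc_self ht)).hasDerivWithinAt) R ⟨hR.le, le_rfl⟩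
  calc ∫ y, h (x + R • y) * meanKernel y = ∫ y, w (x + R • y) * meanKernel y :=
        (integral_mul_meanKernel_congr_of_eqOn hR.le
          (hwh.mono (closedBall_subset_closedBall (by linarith)))).symm
    _ = w x * kernelMass (Euc d) := by
        simpa only [zero_smul, add_zero, integral_const_mul, kernelMass] using hconst
    _ = kernelMass (Euc d) * h x := by
        rw [hwh (mem_closedBall_self (by positivity)), mul_comm]

end Harmonic

section MeanValue

variable {E : Type*} [NormedAddCommGroup E] [InnerProductSpace ℝ E] [FiniteDimensional ℝ E]
  [MeasurableSpace E] [BorelSpace E] {u : E → ℝ} {Ω : Set E}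

lemma HasKernelMeanOn.contDiffOn (hu : HasKernelMeanOn u Ω) (hΩ : IsOpen Ω) :
    ContDiffOn ℝ 1 u Ω := by
  intro x₀ hx₀
  obtain ⟨ε, hε, hball⟩ := Metric.nhds_basis_closedBall.mem_iff.1 (hΩ.mem_nhds hx₀)
  obtain ⟨δ, hδ, -, w, hw, -, hwu⟩ :=
    exists_contDiff_hasCompactSupport_eqOn (k := 0) hΩ (contDiffOn_zero.2 hu.continuousOn)
      hε.le hball
  have hsmooth : ContDiff ℝ 1 fun x =>
      (kernelMass E)⁻¹ * ∫ y, w (x + (ε / 2) • y) * meanKernel y :=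
    contDiff_const.mul (contDiff_integral_comp_add_smul_mul hw.continuous contDiff_meanKernel
      hasCompactSupport_meanKernel (half_pos hε).ne')
  refine (hsmooth.contDiffAt.congr_of_eventuallyEq ?_).contDiffWithinAt
  filter_upwards [closedBall_mem_nhds x₀ (half_pos hε)] with x hx
  have hxε : closedBall x (ε / 2) ⊆ closedBall x₀ ε :=
    closedBall_subset_closedBall' (by linarith [mem_closedBall.1 hx])
  have hxu : EqOn w u (closedBall x (ε / 2)) :=
    hwu.mono (hxε.trans (closedBall_subset_closedBall (by linarith)))
  rw [integral_mul_meanKernel_congr_of_eqOn (half_pos hε).le hxu,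
    hu.integral_eq x _ (half_pos hε) (hxε.trans hball), inv_mul_cancel_left₀ kernelMass_pos.ne']

lemma HasKernelMeanOn.differentiableAt (hu : HasKernelMeanOn u Ω) (hΩ : IsOpen Ω) {x : E}
    (hx : x ∈ Ω) : DifferentiableAt ℝ u x :=
  ((hu.contDiffOn hΩ).contDiffAt (hΩ.mem_nhds hx)).differentiableAt one_ne_zero

lemma integral_fderiv_mul_meanKernel_congr {u w : E → ℝ} {x : E} {R δ : ℝ} (hR : 0 ≤ R)
    (hδ : 0 < δ) (hwu : EqOn w u (closedBall x (R + δ))) (v : E) :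
    ∫ y, fderiv ℝ w (x + R • y) v * meanKernel y =
      ∫ y, fderiv ℝ u (x + R • y) v * meanKernel y :=
  integral_mul_meanKernel_congr fun y hy => by
    have hmem : x + R • y ∈ ball x (R + δ) :=
      closedBall_subset_ball (by linarith) (add_smul_mem_closedBall hR hy)
    rw [((hwu.mono ball_subset_closedBall).eventuallyEq_of_mem
      (isOpen_ball.mem_nhds hmem)).fderiv_eq]

lemma HasKernelMeanOn.fderiv_apply (hu : HasKernelMeanOn u Ω) (hΩ : IsOpen Ω) (v : E) :
    HasKernelMeanOn (fun x => fderiv ℝ u x v) Ω := by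
  refine ⟨((hu.contDiffOn hΩ).continuousOn_fderiv_of_isOpen hΩ le_rfl).clm_apply
    continuousOn_const, fun x R hR hsub => ?_⟩
  obtain ⟨δ, hδ, hδΩ, w, hw, hwc, hwu⟩ :=
    exists_contDiff_hasCompactSupport_eqOn (k := 1) hΩ (hu.contDiffOn hΩ) hR.le hsub
  have hmean : HasDerivAt (fun t : ℝ => ∫ y, w (x + R • y + t • v) * meanKernel y)
      (∫ y, fderiv ℝ w (x + R • y) v * meanKernel y) 0 := by
    simpa only [zero_smul, add_zero] using hasDerivAt_integral_comp_add_smul_mul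
      (μ := volume) (a := fun y => x + R • y) (b := fun _ => v) hw hwc
      contDiff_meanKernel.continuous hasCompactSupport_meanKernel (by fun_prop) continuous_const 0
  have hvalue : HasDerivAt (fun t : ℝ => kernelMass E * u (x + t • v))
      (kernelMass E * fderiv ℝ u x v) 0 :=
    (hu.differentiableAt hΩ (hsub (mem_closedBall_self hR.le))).hasFDerivAt.hasLineDerivAt v
      |>.const_mul _
  have hnear : (fun t : ℝ => ∫ y, w (x + R • y + t • v) * meanKernel y) =ᶠ[𝓝 0]
      fun t => kernelMass E * u (x + t • v) := by
    have hsmall : ∀ᶠ t : ℝ in 𝓝 0, ‖t • v‖ < δ :=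
      (by fun_prop : ContinuousAt (fun t : ℝ => ‖t • v‖) 0).eventually_lt continuousAt_const
        (by simpa using hδ)
    filter_upwards [hsmall] with t ht
    have hball : closedBall (x + t • v) R ⊆ closedBall x (R + δ) :=
      closedBall_subset_closedBall' (by rw [dist_self_add_left]; linarith)
    simp_rw [add_right_comm x _ (t • v)]
    rw [integral_mul_meanKernel_congr_of_eqOn hR.le (hwu.mono hball),
      hu.integral_eq _ R hR (hball.trans hδΩ)]
  rw [← integral_fderiv_mul_meanKernel_congr hR.le hδ hwu v]
  exact (hmean.congr_of_eventuallyEq hnear.symm).unique hvalue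

variable (E) in
/-- The constant `∫ ‖∇k‖ / ∫ k`, `k = meanKernel`, of the interior gradient estimate. -/
def gradConst : ℝ := (∫ y : E, ‖fderiv ℝ (meanKernel : E → ℝ) y‖) / kernelMass E

lemma gradConst_nonneg : 0 ≤ gradConst E :=
  div_nonneg (integral_nonneg fun _ => norm_nonneg _) kernelMass_pos.le

lemma abs_integral_comp_mul_fderiv_meanKernel_le {w : E → ℝ} {x : E} {R M : ℝ} (hR : 0 ≤ R)
    (hM : ∀ y ∈ closedBall x R, |w y| ≤ M) (v : E) :
    |∫ y, w (x + R • y) * fderiv ℝ meanKernel y v| ≤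
      M * ‖v‖ * ∫ y : E, ‖fderiv ℝ (meanKernel : E → ℝ) y‖ := by
  have hint : Integrable (fderiv ℝ (meanKernel : E → ℝ)) :=
    (contDiff_meanKernel.continuous_fderiv one_ne_zero).integrable_of_hasCompactSupport
      (hasCompactSupport_meanKernel.fderiv ℝ)
  rw [← integral_const_mul, ← Real.norm_eq_abs]
  refine norm_integral_le_of_norm_le (hint.norm.const_mul _) (ae_of_all _ fun y => ?_)
  by_cases hy : ‖y‖ ≤ 1
  · calc ‖w (x + R • y) * fderiv ℝ meanKernel y v‖
        ≤ M * (‖fderiv ℝ (meanKernel : E → ℝ) y‖ * ‖v‖) := by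
          rw [norm_mul]
          gcongr
          · exact (abs_nonneg _).trans (hM x (mem_closedBall_self hR))
          · exact hM _ (add_smul_mem_closedBall hR hy)
          · exact ContinuousLinearMap.le_opNorm _ _
      _ = M * ‖v‖ * ‖fderiv ℝ (meanKernel : E → ℝ) y‖ := by ring
  · have hzero : fderiv ℝ (meanKernel : E → ℝ) y = 0 := by
      refine image_eq_zero_of_notMem_tsupport fun hmem => hy ?_
      exact mem_closedBall_zero_iff.1
        (tsupport_meanKernel_subset (tsupport_fderiv_subset ℝ hmem))
    simp [hzero]

lemma HasKernelMeanOn.abs_fderiv_apply_le (hu : HasKernelMeanOn u Ω) (hΩ : IsOpen Ω) {x : E}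
    {R M : ℝ} (hR : 0 < R) (hsub : closedBall x R ⊆ Ω) (hM : ∀ y ∈ closedBall x R, |u y| ≤ M)
    (v : E) : |fderiv ℝ u x v| ≤ gradConst E * ‖v‖ / R * M := by
  obtain ⟨δ, hδ, -, w, hw, -, hwu⟩ :=
    exists_contDiff_hasCompactSupport_eqOn (k := 1) hΩ (hu.contDiffOn hΩ) hR.le hsub
  have hmean : kernelMass E * fderiv ℝ u x v =
      ∫ y, fderiv ℝ w (x + R • y) v * meanKernel y := by
    rw [← (hu.fderiv_apply hΩ v).integral_eq x R hR hsub,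
      integral_fderiv_mul_meanKernel_congr hR.le hδ hwu]
  have hparts := integral_comp_add_smul_mul_fderiv (μ := volume) hw contDiff_meanKernel
    hasCompactSupport_meanKernel x v R
  have hbound : |∫ y, w (x + R • y) * fderiv ℝ meanKernel y v| ≤ _ :=
    abs_integral_comp_mul_fderiv_meanKernel_le hR.le
      (fun y hy => (congrArg abs (hwu (closedBall_subset_closedBall (by linarith) hy))).trans_le
        (hM y hy)) v
  rw [hparts, ← hmean, abs_neg, abs_mul, abs_mul, abs_of_pos hR,
    abs_of_pos (kernelMass_pos (E := E)), ← mul_assoc, ← le_div_iff₀' (by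
      have := kernelMass_pos (E := E); positivity)] at hbound
  refine hbound.trans_eq ?_
  rw [gradConst]
  ring

end MeanValue

section DirectionalDerivatives

variable {E : Type*} [NormedAddCommGroup E] [NormedSpace ℝ E]

/-- The `k`-th derivative of `u` in the direction `v`. -/
def iterDirDeriv (v : E) (u : E → ℝ) : ℕ → E → ℝ
  | 0 => u
  | k + 1 => fun x => fderiv ℝ (iterDirDeriv v u k) x v

lemma iterDirDeriv_zero (v : E) (u : E → ℝ) : iterDirDeriv v u 0 = u := rfl

lemma iterDirDeriv_succ (v : E) (u : E → ℝ) (k : ℕ) (x : E) :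
    iterDirDeriv v u (k + 1) x = fderiv ℝ (iterDirDeriv v u k) x v := rfl

lemma iterDirDeriv_eventuallyEq_zero {u : E → ℝ} {z : E} (h : u =ᶠ[𝓝 z] 0) (v : E) (k : ℕ) :
    iterDirDeriv v u k =ᶠ[𝓝 z] 0 := by
  induction k with
  | zero => exact h
  | succ k ih =>
    filter_upwards [ih.eventuallyEq_nhds] with y hy
    simp [iterDirDeriv_succ, hy.fderiv_eq]

lemma exists_iterDirDeriv_eq_zero_and_fderiv_ne_zero {u : E → ℝ} {v z : E} (h0 : u z = 0)
    (hne : ∃ k, iterDirDeriv v u k z ≠ 0) :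
    ∃ k, iterDirDeriv v u k z = 0 ∧ fderiv ℝ (iterDirDeriv v u k) z ≠ 0 := by
  classical
  have hfirst := Nat.find_spec hne
  obtain ⟨k, hk⟩ : ∃ k, Nat.find hne = k + 1 :=
    Nat.exists_eq_succ_of_ne_zero fun hzero => by
      rw [hzero] at hfirst
      exact hfirst h0
  rw [hk, iterDirDeriv_succ] at hfirst
  refine ⟨k, not_not.1 (Nat.find_min hne (by lia)), fun hzero => hfirst ?_⟩
  rw [hzero, zero_apply]

end DirectionalDerivatives

lemma pow_self_le_factorial_mul_exp_pow (k : ℕ) :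
    (k : ℝ) ^ k ≤ k.factorial * Real.exp 1 ^ k := by
  rw [← Real.exp_nat_mul, mul_one, ← div_le_iff₀' (by positivity)]
  exact Real.pow_div_factorial_le_exp _ k.cast_nonneg k

section CauchyEstimate

variable {E : Type*} [NormedAddCommGroup E] [InnerProductSpace ℝ E] [FiniteDimensional ℝ E]
  [MeasurableSpace E] [BorelSpace E] {u : E → ℝ} {Ω : Set E}

lemma HasKernelMeanOn.hasKernelMeanOn_iterDirDeriv (hu : HasKernelMeanOn u Ω) (hΩ : IsOpen Ω)
    (v : E) (k : ℕ) : HasKernelMeanOn (iterDirDeriv v u k) Ω := by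
  induction k with
  | zero => exact hu
  | succ k ih => exact ih.fderiv_apply hΩ v

lemma HasKernelMeanOn.isDerivSeqOn_iterDirDeriv (hu : HasKernelMeanOn u Ω) (hΩ : IsOpen Ω)
    {y v : E} {s : Set ℝ} (hs : ∀ t ∈ s, y + t • v ∈ Ω) :
    IsDerivSeqOn (fun k t => iterDirDeriv v u k (y + t • v)) s := by
  intro k t ht
  have hline : HasDerivAt (fun t : ℝ => y + t • v) v t := by
    simpa using ((hasDerivAt_id t).smul_const v).const_add y
  have hdiff := (hu.hasKernelMeanOn_iterDirDeriv hΩ v k).differentiableAt hΩ (hs t ht)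
  exact hdiff.hasFDerivAt.comp_hasDerivAt t hline

lemma HasKernelMeanOn.abs_iterDirDeriv_le_of_mem_closedBall (hu : HasKernelMeanOn u Ω)
    (hΩ : IsOpen Ω) {x : E} {R M δ : ℝ} (hδ : 0 < δ) (hsub : closedBall x R ⊆ Ω)
    (hM : ∀ y ∈ closedBall x R, |u y| ≤ M) (v : E) (k : ℕ) :
    ∀ y ∈ closedBall x (R - k * δ),
      |iterDirDeriv v u k y| ≤ (gradConst E * ‖v‖ / δ) ^ k * M := by
  induction k with
  | zero => simpa [iterDirDeriv_zero] using hM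
  | succ k ih =>
    intro y hy
    have hball : closedBall y δ ⊆ closedBall x (R - k * δ) :=
      closedBall_subset_closedBall' (by
        rw [mem_closedBall] at hy
        push_cast at hy
        linarith)
    have hδΩ : closedBall y δ ⊆ Ω :=
      hball.trans ((closedBall_subset_closedBall (sub_le_self _ (by positivity))).trans hsub)
    rw [iterDirDeriv_succ, pow_succ', mul_assoc]
    exact (hu.hasKernelMeanOn_iterDirDeriv hΩ v k).abs_fderiv_apply_le hΩ hδ hδΩ
      (fun z hz => ih z (hball hz)) v

variable (E) in
/-- The constant `A` in the Cauchy estimates `|∂ᵥᵏ u(x)| ≤ M k! (A‖v‖/R)ᵏ` for functions bounded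
by `M` on the ball `B(x, R)`. -/
def cauchyConst : ℝ := gradConst E * Real.exp 1

lemma cauchyConst_nonneg : 0 ≤ cauchyConst E := mul_nonneg gradConst_nonneg (Real.exp_pos _).le

lemma HasKernelMeanOn.abs_iterDirDeriv_le (hu : HasKernelMeanOn u Ω) (hΩ : IsOpen Ω) {x : E}
    {R M : ℝ} (hR : 0 < R) (hsub : closedBall x R ⊆ Ω) (hM : ∀ y ∈ closedBall x R, |u y| ≤ M)
    (v : E) (k : ℕ) :
    |iterDirDeriv v u k x| ≤ M * k.factorial * (cauchyConst E * ‖v‖ / R) ^ k := by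
  rcases eq_or_ne k 0 with rfl | hk
  · simpa [iterDirDeriv_zero] using hM x (mem_closedBall_self hR.le)
  have hk0 : (0 : ℝ) < k := by positivity
  have hM0 : 0 ≤ M := (abs_nonneg _).trans (hM x (mem_closedBall_self hR.le))
  have hC := gradConst_nonneg (E := E)
  -- each derivative costs one step of length `R / k` towards the centre of the ball
  calc |iterDirDeriv v u k x| ≤ (gradConst E * ‖v‖ / (R / k)) ^ k * M :=
        hu.abs_iterDirDeriv_le_of_mem_closedBall hΩ (div_pos hR hk0) hsub hM v k x
          (by simp [mul_div_cancel₀ R hk0.ne'])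
    _ = (gradConst E * ‖v‖ / R) ^ k * M * (k : ℝ) ^ k := by
        rw [mul_right_comm, ← mul_pow]
        congr 2
        field_simp
    _ ≤ (gradConst E * ‖v‖ / R) ^ k * M * (k.factorial * Real.exp 1 ^ k) := by
        gcongr
        exact pow_self_le_factorial_mul_exp_pow k
    _ = M * k.factorial * (cauchyConst E * ‖v‖ / R) ^ k := by
        rw [cauchyConst, show gradConst E * Real.exp 1 * ‖v‖ / R =
          gradConst E * ‖v‖ / R * Real.exp 1 by ring, mul_pow]
        ring

end CauchyEstimate

/-! ### Unique continuation -/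

section UniqueContinuation

variable {E : Type*} [NormedAddCommGroup E] [InnerProductSpace ℝ E] [FiniteDimensional ℝ E]
  [MeasurableSpace E] [BorelSpace E] {u : E → ℝ} {Ω S : Set E} {z : E}

lemma HasKernelMeanOn.eq_zero_of_iterDirDeriv_eq_zero (hu : HasKernelMeanOn u Ω) (hΩ : IsOpen Ω)
    {v : E} {R : ℝ} (hR : 0 < R) (hsub : closedBall z (2 * R) ⊆ Ω) (hvR : ‖v‖ ≤ R)
    (hv : cauchyConst E * ‖v‖ ≤ R / 2) (h0 : ∀ k, iterDirDeriv v u k z = 0) :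
    u (z + v) = 0 := by
  obtain ⟨M, hM⟩ :=
    (isCompact_closedBall z (2 * R)).exists_bound_of_continuousOn (hu.continuousOn.mono hsub)
  have hM0 : 0 ≤ M := (norm_nonneg _).trans (hM z (mem_closedBall_self (by positivity)))
  have hball : ∀ t ∈ Icc (0 : ℝ) 1, closedBall (z + t • v) R ⊆ closedBall z (2 * R) := by
    intro t ht
    refine closedBall_subset_closedBall' ?_
    rw [dist_self_add_left, norm_smul, Real.norm_of_nonneg ht.1]
    linarith [mul_le_of_le_one_left (norm_nonneg v) ht.2]
  have hseq := hu.isDerivSeqOn_iterDirDeriv hΩ fun t ht =>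
    hsub (hball t ht (mem_closedBall_self hR.le))
  have hvanish := hseq.eq_zero_of_forall_eq_zero (by simpa using h0) (q := 1 / 2) (M := M)
    (by norm_num) (by norm_num) fun k t ht => by
      have hA := cauchyConst_nonneg (E := E)
      have hratio : cauchyConst E * ‖v‖ / R ≤ 1 / 2 := by
        rw [div_le_iff₀ hR]
        linarith
      exact (hu.abs_iterDirDeriv_le hΩ hR ((hball t ht).trans hsub)
        (fun y hy => hM y (hball t ht hy)) v k).trans
          (mul_le_mul_of_nonneg_left (pow_le_pow_left₀ (by positivity) hratio k) (by positivity))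
  simpa [iterDirDeriv_zero] using hvanish

lemma HasKernelMeanOn.eventuallyEq_zero_of_iterDirDeriv_eq_zero (hu : HasKernelMeanOn u Ω)
    (hΩ : IsOpen Ω) (hS : Dense S) (hz : z ∈ Ω)
    (h0 : ∀ v ∈ S, ∀ k, iterDirDeriv v u k z = 0) : u =ᶠ[𝓝 z] 0 := by
  have hA := cauchyConst_nonneg (E := E)
  obtain ⟨ε, hε, hball⟩ := Metric.nhds_basis_closedBall.mem_iff.1 (hΩ.mem_nhds hz)
  set R := ε / 2 with hRdef
  have hR : 0 < R := half_pos hε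
  have hsub : closedBall z (2 * R) ⊆ Ω := by rwa [hRdef, mul_div_cancel₀ _ two_ne_zero]
  set η := R / (2 * cauchyConst E + 1) with hηdef
  have hη : 0 < η := by positivity
  have hηA : cauchyConst E * η ≤ R / 2 ∧ η ≤ R := by
    constructor <;> rw [hηdef] <;> field_simp <;> linarith
  have hdense : EqOn (fun v => u (z + v)) 0 (ball 0 η ∩ S) := fun v hv => by
    have hvη : ‖v‖ ≤ η := (mem_ball_zero_iff.1 hv.1).le
    exact hu.eq_zero_of_iterDirDeriv_eq_zero hΩ hR hsub (hvη.trans hηA.2)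
      ((mul_le_mul_of_nonneg_left hvη hA).trans hηA.1) (h0 v hv.2)
  have hmaps : MapsTo (fun v => z + v) (ball 0 η) Ω := fun v hv => hsub (by
    rw [mem_closedBall, dist_self_add_left]
    linarith [mem_ball_zero_iff.1 hv])
  have hcont : ContinuousOn (fun v => u (z + v)) (ball 0 η) :=
    hu.continuousOn.comp (by fun_prop) hmaps
  have hvanish := hdense.of_subset_closure hcont continuousOn_const inter_subset_left
    (hS.open_subset_closure_inter isOpen_ball)
  filter_upwards [ball_mem_nhds z hη] with y hy
  simpa using hvanish (x := y - z) (by rwa [mem_ball_zero_iff, ← dist_eq_norm])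

lemma HasKernelMeanOn.exists_iterDirDeriv_ne_zero (hu : HasKernelMeanOn u Ω) (hΩ : IsOpen Ω)
    (hconn : IsPreconnected Ω) (hS : Dense S) (hne : ∃ y ∈ Ω, u y ≠ 0) (hz : z ∈ Ω) :
    ∃ v ∈ S, ∃ k, iterDirDeriv v u k z ≠ 0 := by
  by_contra! hflat
  have hsub : Ω ⊆ {y | u =ᶠ[𝓝 y] 0} := by
    refine hconn.subset_of_closure_inter_subset isOpen_setOfPred_eventually_nhds
      ⟨z, hz, hu.eventuallyEq_zero_of_iterDirDeriv_eq_zero hΩ hS hz hflat⟩ ?_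
    rintro y ⟨hy, hyΩ⟩
    refine hu.eventuallyEq_zero_of_iterDirDeriv_eq_zero hΩ hS hyΩ fun v _ k => ?_
    by_contra hyne
    have hcont := (hu.hasKernelMeanOn_iterDirDeriv hΩ v k).continuousOn.continuousAt
      (hΩ.mem_nhds hyΩ)
    obtain ⟨w, hw, hw0⟩ := mem_closure_iff_nhds.1 hy _ (hcont.eventually_ne hyne)
    exact hw (iterDirDeriv_eventuallyEq_zero hw0 v k).self_of_nhds
  obtain ⟨y, hy, hyne⟩ := hne
  exact hyne (hsub hy).self_of_nhds

lemma HasKernelMeanOn.exists_regular_iterDirDeriv (hu : HasKernelMeanOn u Ω) (hΩ : IsOpen Ω)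
    (hconn : IsPreconnected Ω) (hS : Dense S) (hne : ∃ y ∈ Ω, u y ≠ 0) (hz : z ∈ Ω)
    (h0 : u z = 0) :
    ∃ v ∈ S, ∃ k, iterDirDeriv v u k z = 0 ∧
      fderiv ℝ (iterDirDeriv v u k) z ≠ 0 := by
  obtain ⟨v, hvS, hv⟩ := hu.exists_iterDirDeriv_ne_zero hΩ hconn hS hne hz
  exact ⟨v, hvS, exists_iterDirDeriv_eq_zero_and_fderiv_ne_zero h0 hv⟩

end UniqueContinuation

/-! ### Propagation along chains and over cubes -/

section Lines

variable {E : Type*} [NormedAddCommGroup E] [NormedSpace ℝ E] {h : E → ℝ} {P : Set E} {a M : ℝ}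

/-- Along every segment of length `2a` centred at a point of `P`, the restriction of `h` satisfies
the bounds of `IsCauchyBounded`. This is the only information on `h` used to count its zeros. -/
def IsCauchyBoundedOnLines (h : E → ℝ) (P : Set E) (a M : ℝ) : Prop :=
  ∀ y ∈ P, ∀ v : E, ‖v‖ = 1 →
    ∃ F : ℕ → ℝ → ℝ, IsCauchyBounded F a M ∧ F 0 = fun t => h (y + t • v)

namespace IsCauchyBoundedOnLines

lemma aemeasurable_one_add_logGap (hL : IsCauchyBoundedOnLines h P a M) {p v : E} (hp : p ∈ P)
    (hv : ‖v‖ = 1) :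
    AEMeasurable (fun t : ℝ => 1 + logGap M (h (p + t • v))) (volume.restrict (Icc (-a) a)) := by
  obtain ⟨F, hF, hF0⟩ := hL p hp v hv
  have hcont := hF.isDerivSeqOn.continuousOn 0
  rw [hF0] at hcont
  exact ((measurable_logGap M).comp_aemeasurable
    (hcont.aemeasurable measurableSet_Icc)).const_add 1

lemma lintegral_one_add_logGap_le (hL : IsCauchyBoundedOnLines h P a M) (ha : 0 < a) {p v : E}
    (hp : p ∈ P) (hv : ‖v‖ = 1) :
    ∫⁻ t in Icc (-a) a, (1 + logGap M (h (p + t • v))) ≤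
      ENNReal.ofReal (lineConst * a) * (1 + logGap M (h p)) := by
  obtain ⟨F, hF, hF0⟩ := hL p hp v hv
  simpa [hF0] using hF.lintegral_one_add_logGap_le ha

lemma encard_zeros_le (hL : IsCauchyBoundedOnLines h P a M) (ha : 0 < a) {p v : E} (hp : p ∈ P)
    (hv : ‖v‖ = 1) :
    ({t ∈ Icc (-a) a | h (p + t • v) = 0}.encard : ℝ≥0∞) ≤ logGap M (h p) := by
  obtain ⟨F, hF, hF0⟩ := hL p hp v hv
  simpa [hF0] using hF.encard_zeros_le ha

lemma exists_one_add_logGap_le (hL : IsCauchyBoundedOnLines h P a M) (ha : 0 < a) {p v : E}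
    (hp : p ∈ P) (hv : ‖v‖ = 1) :
    ∃ t ∈ Icc (a / 2) a, 1 + logGap M (h (p + t • v)) ≤
      ENNReal.ofReal (2 * lineConst) * (1 + logGap M (h p)) := by
  have hsub : Icc (a / 2) a ⊆ Icc (-a) a := Icc_subset_Icc_left (by linarith)
  have hvol : volume (Icc (a / 2) a) = ENNReal.ofReal (a / 2) := by
    rw [Real.volume_Icc, sub_half]
  have hvol0 : ENNReal.ofReal (a / 2) ≠ 0 := (ENNReal.ofReal_pos.2 (half_pos ha)).ne'
  obtain ⟨t, ht, hle⟩ := exists_le_setLAverage (s := Icc (a / 2) a) (by rwa [hvol])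
    (by rw [hvol]; exact ENNReal.ofReal_ne_top)
    ((hL.aemeasurable_one_add_logGap hp hv).mono_measure (Measure.restrict_mono_set _ hsub))
  refine ⟨t, ht, hle.trans ?_⟩
  rw [setLAverage_eq, hvol, ENNReal.div_le_iff hvol0 ENNReal.ofReal_ne_top]
  calc ∫⁻ t in Icc (a / 2) a, (1 + logGap M (h (p + t • v)))
      ≤ ENNReal.ofReal (lineConst * a) * (1 + logGap M (h p)) :=
        (lintegral_mono_set hsub).trans (hL.lintegral_one_add_logGap_le ha hp hv)
    _ = ENNReal.ofReal (2 * lineConst) * (1 + logGap M (h p)) * ENNReal.ofReal (a / 2) := by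
        rw [mul_right_comm, ← ENNReal.ofReal_mul (by linarith [lineConst_pos])]
        congr 2
        ring

lemma exists_dist_le_and_one_add_logGap_le (hL : IsCauchyBoundedOnLines h P a M) (ha : 0 < a)
    {p q : E} (hp : p ∈ P) (hpq : a / 2 ≤ dist p q) :
    ∃ p', dist p' q ≤ max (dist p q - a / 2) (a / 2) ∧
      1 + logGap M (h p') ≤ ENNReal.ofReal (2 * lineConst) * (1 + logGap M (h p)) := by
  set D := dist p q with hD
  have hD0 : 0 < D := (half_pos ha).trans_le hpq
  set v : E := D⁻¹ • (q - p) with hv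
  have hv1 : ‖v‖ = 1 := by
    rw [hv, norm_smul, norm_inv, Real.norm_of_nonneg hD0.le, ← dist_eq_norm', ← hD,
      inv_mul_cancel₀ hD0.ne']
  have hq : q = p + D • v := by rw [hv, smul_inv_smul₀ hD0.ne', add_sub_cancel]
  obtain ⟨t, ht, hle⟩ := hL.exists_one_add_logGap_le ha hp hv1
  refine ⟨p + t • v, ?_, hle⟩
  rw [hq, dist_add_left, dist_eq_norm, ← sub_smul, norm_smul, hv1, mul_one, Real.norm_eq_abs]
  refine abs_le.2 ⟨?_, ?_⟩
  · linarith [ht.1, le_max_left (D - a / 2) (a / 2)]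
  · linarith [ht.2, le_max_right (D - a / 2) (a / 2)]

lemma exists_dist_le_and_one_add_logGap_le_pow (hL : IsCauchyBoundedOnLines h P a M) (ha : 0 < a)
    (q : E) (m : ℕ) : ∀ p, closedBall q (dist p q) ⊆ P → dist p q ≤ (m + 1) * (a / 2) →
    ∃ p', dist p' q ≤ a / 2 ∧
      1 + logGap M (h p') ≤ ENNReal.ofReal (2 * lineConst) ^ m * (1 + logGap M (h p)) := by
  have hK : 1 ≤ ENNReal.ofReal (2 * lineConst) := by
    rw [ENNReal.one_le_ofReal, lineConst]
    linarith [Real.exp_pos 4]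
  induction m with
  | zero => exact fun p _ hpq => ⟨p, by simpa using hpq, by simp⟩
  | succ m ih =>
    intro p hP hpq
    rcases le_total (dist p q) (a / 2) with hnear | hfar
    · exact ⟨p, hnear, le_mul_of_one_le_left' (one_le_pow₀ hK)⟩
    obtain ⟨p₁, hp₁, hgap₁⟩ :=
      hL.exists_dist_le_and_one_add_logGap_le ha (hP (mem_closedBall.2 le_rfl)) hfar
    have hcloser : dist p₁ q ≤ dist p q := hp₁.trans (max_le (by linarith) hfar)
    have hp₁m : dist p₁ q ≤ (m + 1) * (a / 2) := by
      refine hp₁.trans (max_le ?_ (le_mul_of_one_le_left (by positivity) (by simp)))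
      push_cast at hpq
      linarith
    obtain ⟨p₂, hp₂, hgap₂⟩ := ih p₁ ((closedBall_subset_closedBall hcloser).trans hP) hp₁m
    refine ⟨p₂, hp₂, hgap₂.trans ?_⟩
    rw [pow_succ, mul_assoc]
    gcongr

end IsCauchyBoundedOnLines

lemma lintegral_pi_fin_succ_le {α : Type*} [MeasurableSpace α] (μ : Measure α) [SigmaFinite μ]
    {m : ℕ} (f : (Fin (m + 1) → α) → ℝ≥0∞) :
    ∫⁻ x, f x ∂Measure.pi (fun _ => μ) ≤
      ∫⁻ t, ∫⁻ x, f (Fin.cons t x) ∂Measure.pi (fun _ => μ) ∂μ := by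
  have hpres := measurePreserving_piFinSuccAbove (fun _ : Fin (m + 1) => μ) 0
  rw [← hpres.symm.lintegral_comp_emb (MeasurableEquiv.measurableEmbedding _)]
  refine (lintegral_prod_le _).trans_eq ?_
  simp [MeasurableEquiv.piFinSuccAbove, Fin.consEquiv]

lemma IsCauchyBoundedOnLines.lintegral_pi_one_add_logGap_le (hL : IsCauchyBoundedOnLines h P a M)
    (ha : 0 < a) {m : ℕ} {e : Fin m → E} (he : ∀ i, ‖e i‖ = 1) {p : E}
    (hp : closedBall p (m * a) ⊆ P) :
    ∫⁻ s, (1 + logGap M (h (p + ∑ i, s i • e i)))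
      ∂Measure.pi (fun _ => volume.restrict (Icc (-a) a)) ≤
      ENNReal.ofReal (lineConst * a) ^ m * (1 + logGap M (h p)) := by
  induction m generalizing p with
  | zero => simp
  | succ m ih =>
    have hslice : ∀ t ∈ Icc (-a) a, closedBall (p + t • e 0) (m * a) ⊆ P := fun t ht => by
      refine (closedBall_subset_closedBall' ?_).trans hp
      rw [dist_self_add_left, norm_smul, he, mul_one, Real.norm_eq_abs]
      push_cast
      linarith [abs_le.2 ht]
    calc ∫⁻ s, (1 + logGap M (h (p + ∑ i, s i • e i)))
          ∂Measure.pi (fun _ => volume.restrict (Icc (-a) a))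
        ≤ ∫⁻ t in Icc (-a) a, ENNReal.ofReal (lineConst * a) ^ m *
            (1 + logGap M (h (p + t • e 0))) := by
          refine (lintegral_pi_fin_succ_le _ _).trans
            (setLIntegral_mono' measurableSet_Icc fun t ht => ?_)
          simpa only [Fin.sum_univ_succ, Fin.cons_zero, Fin.cons_succ, add_assoc] using
            ih (fun i => he i.succ) (hslice t ht)
      _ ≤ ENNReal.ofReal (lineConst * a) ^ m *
            (ENNReal.ofReal (lineConst * a) * (1 + logGap M (h p))) := by
          rw [lintegral_const_mul' _ _ (by finiteness)]
          gcongr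
          exact hL.lintegral_one_add_logGap_le ha (hp (mem_closedBall_self (by positivity))) (he 0)
      _ = ENNReal.ofReal (lineConst * a) ^ (m + 1) * (1 + logGap M (h p)) := by
          rw [pow_succ, mul_assoc]

end Lines

/-! ### Nodal sets as countable unions of graphs -/

section Coordinates

variable {d n : ℕ}

lemma sum_smul_single (w : Euc d) : ∑ i, w i • (EuclideanSpace.single i 1 : Euc d) = w := by
  simpa using (EuclideanSpace.basisFun (Fin d) ℝ).sum_repr w

lemma norm_le_sum_abs (w : Euc d) : ‖w‖ ≤ ∑ i, |w i| := by
  conv_lhs => rw [← sum_smul_single w]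
  exact (norm_sum_le _ _).trans_eq (by simp [norm_smul])

lemma isClosed_cube (c : Euc d) (s : ℝ) : IsClosed (cube c s) := by
  simp only [cube, ofPred_forall]
  exact isClosed_iInter fun i => isClosed_le (by fun_prop) continuous_const

lemma cube_subset_closedBall (c : Euc d) (s : ℝ) : cube c s ⊆ closedBall c (d * (s / 2)) := by
  intro z hz
  rw [mem_closedBall, dist_eq_norm]
  calc ‖z - c‖ ≤ ∑ i, |(z - c) i| := norm_le_sum_abs _
    _ ≤ ∑ _i : Fin d, s / 2 := Finset.sum_le_sum fun i _ => hz i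
    _ = d * (s / 2) := by simp

lemma ball_subset_cube {c q : Euc d} {ρ s : ℝ} (h : dist q c + ρ ≤ s / 2) :
    ball q ρ ⊆ cube c s := by
  intro z hz i
  have hcoord : |z i - c i| ≤ dist z c := by
    rw [dist_eq_norm]
    exact PiLp.norm_apply_le (z - c) i
  rw [mem_ball] at hz
  linarith [dist_triangle z q c]

/-- The projection forgetting the `j`-th coordinate. Its target carries the sup norm, for which
Hausdorff measure in the top dimension is Lebesgue measure. -/
def dropCoord (j : Fin (n + 1)) (z : Euc (n + 1)) : Fin n → ℝ := fun i => z (j.succAbove i)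

lemma continuous_dropCoord (j : Fin (n + 1)) : Continuous (dropCoord j) := by
  unfold dropCoord
  fun_prop

lemma dist_dropCoord (j : Fin (n + 1)) (x y : Euc (n + 1)) :
    dist (dropCoord j x) (dropCoord j y) = ‖dropCoord j (x - y)‖ := dist_eq_norm _ _

lemma eq_add_sum_smul_single_add_smul_single (j : Fin (n + 1)) (p z : Euc (n + 1)) :
    z = p + ∑ i, (dropCoord j z - dropCoord j p) i • EuclideanSpace.single (j.succAbove i) 1 +
      (z j - p j) • EuclideanSpace.single j 1 := by
  have hsum := sum_smul_single (z - p)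
  rw [Fin.sum_univ_succAbove _ j] at hsum
  rw [add_assoc, add_comm (∑ i, _), ← sub_eq_iff_eq_add', ← hsum]
  rfl

end Coordinates

section Graphs

variable {n : ℕ} {j : Fin (n + 1)} {A B : Set (Euc (n + 1))}

/-- `B` is a Lipschitz graph over a subset of the `j`-th coordinate hyperplane; the Lipschitz
constant `3n` is the one produced by `exists_isGraphOver_of_fderiv_ne_zero`. -/
def IsGraphOver (j : Fin (n + 1)) (B : Set (Euc (n + 1))) : Prop :=
  AntilipschitzWith (3 * n) (B.domRestrict (dropCoord j))

namespace IsGraphOver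

lemma mono (hB : IsGraphOver j B) (hA : A ⊆ B) : IsGraphOver j A := fun x y =>
  hB ⟨x, hA x.2⟩ ⟨y, hA y.2⟩

lemma injOn (hB : IsGraphOver j B) : InjOn (dropCoord j) B := injOn_iff_injective.2 hB.injective

lemma measurableSet_image (hB : IsGraphOver j B) (hm : MeasurableSet B) :
    MeasurableSet (dropCoord j '' B) :=
  hm.image_of_continuousOn_injOn (continuous_dropCoord j).continuousOn hB.injOn

lemma hausdorffMeasure_le (hB : IsGraphOver j B) :
    μH[n] B ≤ (3 * n) ^ n * volume (dropCoord j '' B) := by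
  have hpi : (μH[n] : Measure (Fin n → ℝ)) = volume := by
    simpa using hausdorffMeasure_pi_real (ι := Fin n)
  calc μH[n] B = μH[n] (univ : Set B) := by
        have hcoe := (isometry_subtype_coe (s := B)).hausdorffMeasure_image
          (d := (n : ℝ)) (Or.inl n.cast_nonneg) univ
        rwa [image_univ, Subtype.range_coe] at hcoe
    _ ≤ ((3 * n : ℝ≥0) : ℝ≥0∞) ^ (n : ℝ) * μH[n] (B.domRestrict (dropCoord j) '' univ) :=
        hB.le_hausdorffMeasure_image n.cast_nonneg univ
    _ = (3 * n) ^ n * volume (dropCoord j '' B) := by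
        rw [image_univ, range_domRestrict, hpi, ENNReal.rpow_natCast]
        simp

end IsGraphOver

lemma exists_apply_single_ne_zero_forall_abs_le {φ : Euc (n + 1) →L[ℝ] ℝ} (hφ : φ ≠ 0) :
    ∃ j, φ (EuclideanSpace.single j 1) ≠ 0 ∧
      ∀ i, |φ (EuclideanSpace.single i 1)| ≤ |φ (EuclideanSpace.single j 1)| := by
  obtain ⟨j, -, hj⟩ := Finset.exists_max_image Finset.univ
    (fun i => |φ (EuclideanSpace.single i 1)|) Finset.univ_nonempty
  refine ⟨j, fun h0 => hφ (ContinuousLinearMap.ext fun w => ?_), fun i => hj i (Finset.mem_univ i)⟩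
  rw [← sum_smul_single w, map_sum]
  refine Finset.sum_eq_zero fun i hi => ?_
  rw [map_smul, abs_nonpos_iff.1 ((hj i hi).trans_eq (abs_eq_zero.2 h0)), smul_zero]

lemma norm_le_mul_norm_dropCoord {φ : Euc (n + 1) →L[ℝ] ℝ}
    (hj : φ (EuclideanSpace.single j 1) ≠ 0)
    (hmax : ∀ i, |φ (EuclideanSpace.single i 1)| ≤ |φ (EuclideanSpace.single j 1)|)
    {w : Euc (n + 1)} (hw : |φ w| ≤ |φ (EuclideanSpace.single j 1)| / 3 * ‖w‖) :
    ‖w‖ ≤ 3 * n * ‖dropCoord j w‖ := by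
  set b := |φ (EuclideanSpace.single j 1)|
  have hb : 0 < b := abs_pos.2 hj
  set T := ∑ i, w (j.succAbove i) • φ (EuclideanSpace.single (j.succAbove i) 1)
  have hcoord (i) : |w (j.succAbove i)| ≤ ‖dropCoord j w‖ := norm_le_pi_norm (dropCoord j w) i
  have hT : |T| ≤ b * (n * ‖dropCoord j w‖) := by
    calc |T| ≤ ∑ _i : Fin n, ‖dropCoord j w‖ * b := by
          refine (Finset.abs_sum_le_sum_abs _ _).trans (Finset.sum_le_sum fun i _ => ?_)
          rw [smul_eq_mul, abs_mul]
          exact mul_le_mul (hcoord i) (hmax _) (abs_nonneg _) (norm_nonneg _)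
      _ = b * (n * ‖dropCoord j w‖) := by
          simp only [Finset.sum_const, Finset.card_univ, Fintype.card_fin, nsmul_eq_mul]
          ring
  have hnorm : ‖w‖ ≤ |w j| + n * ‖dropCoord j w‖ := by
    refine (norm_le_sum_abs w).trans ?_
    rw [Fin.sum_univ_succAbove _ j]
    gcongr
    exact (Finset.sum_le_sum fun i _ => hcoord i).trans_eq (by simp)
  have hφw : φ w = w j • φ (EuclideanSpace.single j 1) + T := by
    conv_lhs => rw [← sum_smul_single w, Fin.sum_univ_succAbove _ j]
    simp [T]
  have hwj : b * |w j| ≤ |φ w| + |T| := by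
    rw [mul_comm, ← abs_mul, ← smul_eq_mul, eq_sub_of_add_eq hφw.symm]
    exact abs_sub _ _
  have hwj2 : b * |w j| ≤ b * (2 * (n * ‖dropCoord j w‖)) := by
    linarith [mul_le_mul_of_nonneg_left hnorm (show 0 ≤ b / 3 by positivity)]
  linarith [le_of_mul_le_mul_left hwj2 hb]

lemma exists_isGraphOver_of_fderiv_ne_zero {g : Euc (n + 1) → ℝ} {z : Euc (n + 1)}
    (hg : ContDiffAt ℝ 1 g z) (hne : fderiv ℝ g z ≠ 0) :
    ∃ j, ∃ U ∈ 𝓝 z, IsGraphOver j {y ∈ U | g y = 0} := by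
  obtain ⟨j, hj, hmax⟩ := exists_apply_single_ne_zero_forall_abs_le hne
  set φ := fderiv ℝ g z
  have happrox := (hg.hasStrictFDerivAt one_ne_zero).isLittleO.def
    (show 0 < |φ (EuclideanSpace.single j 1)| / 3 by positivity)
  rw [nhds_prod_eq] at happrox
  obtain ⟨U, hU, hUφ⟩ := (eventually_prod_self_iff (r := fun x y =>
    ‖g x - g y - φ (x - y)‖ ≤ |φ (EuclideanSpace.single j 1)| / 3 * ‖x - y‖)).1 happrox
  refine ⟨j, U, hU, AntilipschitzWith.of_le_mul_dist fun ⟨x, hxU, hx⟩ ⟨y, hyU, hy⟩ => ?_⟩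
  have hxy := hUφ x hxU y hyU
  rw [hx, hy, sub_zero, zero_sub, norm_neg] at hxy
  rw [Subtype.dist_eq, dist_eq_norm, domRestrict_apply, domRestrict_apply, dist_dropCoord]
  exact_mod_cast norm_le_mul_norm_dropCoord hj hmax hxy

end Graphs

lemma encard_setOf_mem_image_le {ι X Y : Type*} {A : ι → Set X} {W : Set X}
    (hA : Pairwise (Function.onFun Disjoint A)) (hW : ∀ i, A i ⊆ W) (f : X → Y) (y : Y) :
    {i | y ∈ f '' A i}.encard ≤ {x ∈ W | f x = y}.encard := by
  have hpre : ∀ i : {i | y ∈ f '' A i}, ∃ x ∈ A i, f x = y := fun i => i.2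
  choose x hxA hxy using hpre
  have hinj : Function.Injective x := fun i k hik => by
    by_contra hne
    exact (hA fun h => hne (Subtype.ext h)).le_bot ⟨hxA i, hik ▸ hxA k⟩
  rw [encard, ENat.card_congr (Equiv.ofInjective x hinj)]
  exact encard_le_encard (range_subset_iff.2 fun i => ⟨hW i (hxA i), hxy i⟩)

lemma tsum_measure_image_le_lintegral_encard {ι X Y : Type*} [Countable ι] [MeasurableSpace Y]
    (ν : Measure Y) {f : X → Y} {A : ι → Set X} {W : Set X}
    (hA : Pairwise (Function.onFun Disjoint A)) (hW : ∀ i, A i ⊆ W)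
    (hf : ∀ i, MeasurableSet (f '' A i)) :
    ∑' i, ν (f '' A i) ≤ ∫⁻ y, ({x ∈ W | f x = y}.encard : ℝ≥0∞) ∂ν := by
  calc ∑' i, ν (f '' A i) = ∑' i, ∫⁻ y, (f '' A i).indicator 1 y ∂ν := by
        simp only [lintegral_indicator_one (hf _)]
    _ = ∫⁻ y, ∑' i, (f '' A i).indicator 1 y ∂ν :=
        (lintegral_tsum fun i => (measurable_one.indicator (hf i)).aemeasurable).symm
    _ = ∫⁻ y, ({i | y ∈ f '' A i}.encard : ℝ≥0∞) ∂ν := by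
        refine lintegral_congr fun y => ?_
        rw [← ENNReal.tsum_set_one, tsum_subtype {i | y ∈ f '' A i} fun _ => (1 : ℝ≥0∞)]
        rfl
    _ ≤ ∫⁻ y, ({x ∈ W | f x = y}.encard : ℝ≥0∞) ∂ν :=
        lintegral_mono fun y => ENat.toENNReal_le.2 (encard_setOf_mem_image_le hA hW f y)

section GraphCovers

variable {n : ℕ} {W : Set (Euc (n + 1))}

/-- `W` is covered by countably many measurable Lipschitz graphs over coordinate hyperplanes. -/
def IsCoveredByGraphs (W : Set (Euc (n + 1))) : Prop :=
  ∃ 𝒯 : Set (Set (Euc (n + 1))), 𝒯.Countable ∧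
    (∀ B ∈ 𝒯, MeasurableSet B ∧ ∃ j, IsGraphOver j B) ∧ W ⊆ ⋃₀ 𝒯

namespace IsCoveredByGraphs

lemma mono {V : Set (Euc (n + 1))} (hV : IsCoveredByGraphs V) (hWV : W ⊆ V) :
    IsCoveredByGraphs W :=
  hV.imp fun _ h => ⟨h.1, h.2.1, hWV.trans h.2.2⟩

lemma biUnion {ι : Type*} {s : Set ι} (hs : s.Countable) {V : ι → Set (Euc (n + 1))}
    (hV : ∀ i ∈ s, IsCoveredByGraphs (V i)) (hWV : W ⊆ ⋃ i ∈ s, V i) : IsCoveredByGraphs W := by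
  choose! 𝒯 h𝒯 hgraph hcov using hV
  refine ⟨⋃ i ∈ s, 𝒯 i, hs.biUnion h𝒯, fun B hB => ?_, hWV.trans (iUnion₂_subset fun i hi => ?_)⟩
  · obtain ⟨i, hi, hBi⟩ := mem_iUnion₂.1 hB
    exact hgraph i hi B hBi
  · exact (hcov i hi).trans (sUnion_subset_sUnion (subset_biUnion_of_mem hi))

lemma exists_iUnion_disjoint (hW : IsCoveredByGraphs W) (hm : MeasurableSet W) :
    ∃ A : ℕ → Set (Euc (n + 1)), (∀ i, MeasurableSet (A i)) ∧ (∀ i, ∃ j, IsGraphOver j (A i)) ∧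
      Pairwise (Function.onFun Disjoint A) ∧ (⋃ i, A i) = W := by
  obtain ⟨𝒯, h𝒯, hgraph, hcov⟩ := hW
  obtain ⟨T, hT⟩ := (h𝒯.insert ∅).exists_eq_range (insert_nonempty _ _)
  have hTgraph : ∀ i, MeasurableSet (T i) ∧ ∃ j, IsGraphOver j (T i) := fun i => by
    rcases hT.ge (mem_range_self i) with hempty | hmem
    · rw [hempty]
      exact ⟨MeasurableSet.empty, 0, fun x => x.2.elim⟩
    · exact hgraph _ hmem
  refine ⟨fun i => disjointed T i ∩ W, fun i => ?_, fun i => ?_, fun i k hik => ?_, ?_⟩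
  · exact (MeasurableSet.disjointed (fun i => (hTgraph i).1) i).inter hm
  · exact (hTgraph i).2.imp fun j hj => hj.mono (inter_subset_left.trans (disjointed_subset T i))
  · exact (disjoint_disjointed T hik).mono inter_subset_left inter_subset_left
  · rw [← iUnion_inter, iUnion_disjointed, ← sUnion_range, ← hT, inter_eq_right]
    exact hcov.trans (sUnion_subset_sUnion (subset_insert _ _))

lemma hausdorffMeasure_le (hW : IsCoveredByGraphs W) (hm : MeasurableSet W) :
    μH[n] W ≤ (3 * n) ^ n *
      ∑ j, ∫⁻ y, ({z ∈ W | dropCoord j z = y}.encard : ℝ≥0∞) := by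
  obtain ⟨A, hAm, hgraph, hdisj, rfl⟩ := hW.exists_iUnion_disjoint hm
  choose J hJ using hgraph
  calc μH[n] (⋃ i, A i) ≤ ∑' i, μH[n] (A i) := measure_iUnion_le _
    _ ≤ ∑' i, (3 * n) ^ n * volume (dropCoord (J i) '' A i) :=
        ENNReal.tsum_le_tsum fun i => (hJ i).hausdorffMeasure_le
    _ = (3 * n) ^ n * ∑ j, ∑' i : {i // J i = j}, volume (dropCoord (J i) '' A i) := by
        rw [ENNReal.tsum_mul_left, ← (Equiv.sigmaFiberEquiv J).tsum_eq, ENNReal.tsum_sigma',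
          tsum_fintype]
        rfl
    _ ≤ (3 * n) ^ n *
          ∑ j, ∫⁻ y, ({z ∈ ⋃ i, A i | dropCoord j z = y}.encard : ℝ≥0∞) := by
        gcongr with j
        calc ∑' i : {i // J i = j}, volume (dropCoord (J i) '' A i)
            = ∑' i : {i // J i = j}, volume (dropCoord j '' A i) :=
              tsum_congr fun i => by rw [i.2]
          _ ≤ _ := tsum_measure_image_le_lintegral_encard volume
              (hdisj.comp_of_injective Subtype.val_injective) (fun i => subset_iUnion A i)
              fun i => (show IsGraphOver j (A i) by
                simpa only [i.2] using hJ i).measurableSet_image (hAm i)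

end IsCoveredByGraphs

lemma isCoveredByGraphs_setOf_fderiv_ne_zero {Ω : Set (Euc (n + 1))} (hΩ : IsOpen Ω)
    {g : Euc (n + 1) → ℝ} (hg : ContDiffOn ℝ 1 g Ω) :
    IsCoveredByGraphs {z ∈ Ω | g z = 0 ∧ fderiv ℝ g z ≠ 0} := by
  have hloc : ∀ z ∈ {z ∈ Ω | g z = 0 ∧ fderiv ℝ g z ≠ 0}, ∃ K ∈ 𝓝 z,
      IsClosed {y ∈ K | g y = 0} ∧ ∃ j, IsGraphOver j {y ∈ K | g y = 0} := by
    rintro z ⟨hz, -, hne⟩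
    obtain ⟨j, U, hU, hgraph⟩ :=
      exists_isGraphOver_of_fderiv_ne_zero (hg.contDiffAt (hΩ.mem_nhds hz)) hne
    obtain ⟨ε, hε, hball⟩ :=
      Metric.nhds_basis_closedBall.mem_iff.1 (inter_mem (hΩ.mem_nhds hz) hU)
    refine ⟨closedBall z ε, closedBall_mem_nhds z hε, ?_, j, hgraph.mono fun y hy =>
      ⟨(hball hy.1).2, hy.2⟩⟩
    exact (hg.continuousOn.mono (hball.trans inter_subset_left)).preimage_isClosed_of_isClosed
      isClosed_closedBall isClosed_singleton
  choose! K hK hclosed hgraph using hloc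
  obtain ⟨t, ht, htc, hcov⟩ := TopologicalSpace.countable_cover_nhdsWithin
    fun z hz => mem_nhdsWithin_of_mem_nhds (hK z hz)
  refine IsCoveredByGraphs.biUnion htc (V := fun z => {y ∈ K z | g y = 0}) (fun z hz => ?_) ?_
  · exact ⟨{_}, countable_singleton _, by
      rintro _ rfl
      exact ⟨(hclosed z (ht hz)).measurableSet, hgraph z (ht hz)⟩, (sUnion_singleton _).ge⟩
  · intro y hy
    obtain ⟨z, hz, hyz⟩ := mem_iUnion₂.1 (hcov hy)
    exact mem_iUnion₂.2 ⟨z, hz, hyz, hy.2.1⟩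

lemma HasKernelMeanOn.isCoveredByGraphs_zeroSet {Ω : Set (Euc (n + 1))} {u : Euc (n + 1) → ℝ}
    (hu : HasKernelMeanOn u Ω) (hΩ : IsOpen Ω) (hconn : IsPreconnected Ω)
    (hne : ∃ y ∈ Ω, u y ≠ 0) : IsCoveredByGraphs (zeroSet Ω u) := by
  obtain ⟨S, hSc, hSd⟩ := TopologicalSpace.exists_countable_dense (Euc (n + 1))
  refine IsCoveredByGraphs.biUnion (hSc.prod (countable_univ (α := ℕ)))
    (V := fun vk => {z ∈ Ω | iterDirDeriv vk.1 u vk.2 z = 0 ∧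
      fderiv ℝ (iterDirDeriv vk.1 u vk.2) z ≠ 0})
    (fun vk _ => isCoveredByGraphs_setOf_fderiv_ne_zero hΩ
      ((hu.hasKernelMeanOn_iterDirDeriv hΩ vk.1 vk.2).contDiffOn hΩ)) fun z hz => ?_
  obtain ⟨v, hv, k, hk⟩ := hu.exists_regular_iterDirDeriv hΩ hconn hSd hne hz.1 hz.2
  exact mem_iUnion₂.2 ⟨(v, k), ⟨hv, mem_univ k⟩, hz.1, hk⟩

end GraphCovers

section Cube

variable {n : ℕ} {h : Euc (n + 1) → ℝ} {P Ω : Set (Euc (n + 1))} {a M : ℝ} {p : Euc (n + 1)}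

lemma dropCoord_sub_mem_pi_Icc (j : Fin (n + 1)) {z : Euc (n + 1)} (hz : z ∈ cube p (2 * a)) :
    dropCoord j z - dropCoord j p ∈ univ.pi fun _ => Icc (-a) a := fun i _ =>
  abs_le.1 ((hz (j.succAbove i)).trans_eq (mul_div_cancel_left₀ a two_ne_zero))

lemma add_sum_smul_single_mem_closedBall (j : Fin (n + 1)) {s : Fin n → ℝ}
    (hs : s ∈ univ.pi fun _ => Icc (-a) a) :
    p + ∑ i, s i • (EuclideanSpace.single (j.succAbove i) 1 : Euc (n + 1)) ∈
      closedBall p (n * a) := by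
  rw [mem_closedBall, dist_self_add_left]
  calc ‖∑ i, s i • (EuclideanSpace.single (j.succAbove i) 1 : Euc (n + 1))‖
      ≤ ∑ i, |s i| := (norm_sum_le _ _).trans_eq (by simp [norm_smul])
    _ ≤ ∑ _i : Fin n, a := Finset.sum_le_sum fun i _ => abs_le.2 (hs i (mem_univ i))
    _ = n * a := by simp

namespace IsCauchyBoundedOnLines

lemma encard_zeroSet_cube_fiber_le (hL : IsCauchyBoundedOnLines h P a M) (ha : 0 < a)
    (hp : closedBall p (n * a) ⊆ P) (j : Fin (n + 1)) {s : Fin n → ℝ}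
    (hs : s ∈ univ.pi fun _ => Icc (-a) a) :
    ({z ∈ zeroSet (cube p (2 * a)) h | dropCoord j z = s + dropCoord j p}.encard : ℝ≥0∞) ≤
      logGap M (h (p + ∑ i, s i • EuclideanSpace.single (j.succAbove i) 1)) := by
  set b := p + ∑ i, s i • (EuclideanSpace.single (j.succAbove i) 1 : Euc (n + 1))
  have hfiber : ∀ z : Euc (n + 1), dropCoord j z = s + dropCoord j p →
      z = b + (z j - p j) • EuclideanSpace.single j 1 := fun z hz => by
    simpa [hz] using eq_add_sum_smul_single_add_smul_single j p z
  refine le_trans (ENat.toENNReal_le.2 ?_) (hL.encard_zeros_le ha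
    (hp (add_sum_smul_single_mem_closedBall j hs)) (v := EuclideanSpace.single j 1) (by simp))
  refine encard_le_encard_of_injOn (f := fun z => z j - p j) ?_ ?_
  · rintro z ⟨⟨hzcube, hz0⟩, hz⟩
    refine ⟨abs_le.1 ((hzcube j).trans_eq (mul_div_cancel_left₀ a two_ne_zero)), ?_⟩
    rwa [← hfiber z hz]
  · rintro z ⟨-, hz⟩ z' ⟨-, hz'⟩ hzz'
    rw [hfiber z hz, hfiber z' hz']
    exact congrArg (fun t : ℝ => b + t • EuclideanSpace.single j 1) hzz'

lemma lintegral_encard_zeroSet_cube_fiber_le (hL : IsCauchyBoundedOnLines h P a M) (ha : 0 < a)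
    (hp : closedBall p (n * a) ⊆ P) (j : Fin (n + 1)) :
    ∫⁻ y, ({z ∈ zeroSet (cube p (2 * a)) h | dropCoord j z = y}.encard : ℝ≥0∞) ≤
      ENNReal.ofReal (lineConst * a) ^ n * (1 + logGap M (h p)) := by
  set box : Set (Fin n → ℝ) := univ.pi fun _ => Icc (-a) a
  have hsupp : Function.support (fun s =>
      ({z ∈ zeroSet (cube p (2 * a)) h | dropCoord j z = s + dropCoord j p}.encard : ℝ≥0∞)) ⊆
        box := fun s hs => by
    obtain ⟨z, hz, hzs⟩ := encard_ne_zero.1 (mt ENat.toENNReal_eq_zero.2 hs)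
    rw [← add_sub_cancel_right s (dropCoord j p), ← hzs]
    exact dropCoord_sub_mem_pi_Icc j hz.1
  rw [← lintegral_add_right_eq_self _ (dropCoord j p), ← setLIntegral_eq_of_support_subset hsupp]
  calc ∫⁻ s in box,
        ({z ∈ zeroSet (cube p (2 * a)) h | dropCoord j z = s + dropCoord j p}.encard : ℝ≥0∞)
      ≤ ∫⁻ s in box, (1 + logGap M (h (p + ∑ i, s i • EuclideanSpace.single (j.succAbove i) 1))) :=
        setLIntegral_mono' (MeasurableSet.univ_pi fun _ => measurableSet_Icc) fun s hs =>
          (hL.encard_zeroSet_cube_fiber_le ha hp j hs).trans le_add_self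
    _ ≤ ENNReal.ofReal (lineConst * a) ^ n * (1 + logGap M (h p)) := by
        rw [volume_pi, Measure.restrict_pi_pi]
        exact hL.lintegral_pi_one_add_logGap_le ha (fun i => by simp) hp

lemma hausdorffMeasure_zeroSet_cube_le (hL : IsCauchyBoundedOnLines h P a M) (ha : 0 < a)
    (hu : HasKernelMeanOn h Ω) (hΩ : IsOpen Ω) (hconn : IsPreconnected Ω)
    (hne : ∃ y ∈ Ω, h y ≠ 0) (hPΩ : P ⊆ Ω) (hp : closedBall p ((n + 1) * a) ⊆ P) :
    μH[n] (zeroSet (cube p (2 * a)) h) ≤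
      (3 * n) ^ n * ((n + 1) * (ENNReal.ofReal (lineConst * a) ^ n * (1 + logGap M (h p)))) := by
  have hcube : cube p (2 * a) ⊆ Ω :=
    (cube_subset_closedBall p (2 * a)).trans (by simpa using hp.trans hPΩ)
  have hmeas : MeasurableSet (zeroSet (cube p (2 * a)) h) :=
    ((hu.continuousOn.mono hcube).preimage_isClosed_of_isClosed (isClosed_cube p (2 * a))
      isClosed_singleton).measurableSet
  have hsub : closedBall p (n * a) ⊆ P :=
    (closedBall_subset_closedBall (by linarith)).trans hp
  refine (((hu.isCoveredByGraphs_zeroSet hΩ hconn hne).mono fun z hz =>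
    ⟨hcube hz.1, hz.2⟩).hausdorffMeasure_le hmeas).trans ?_
  gcongr
  calc ∑ j, ∫⁻ y, ({z ∈ zeroSet (cube p (2 * a)) h | dropCoord j z = y}.encard : ℝ≥0∞)
      ≤ ∑ _j : Fin (n + 1), ENNReal.ofReal (lineConst * a) ^ n * (1 + logGap M (h p)) :=
        Finset.sum_le_sum fun j _ => hL.lintegral_encard_zeroSet_cube_fiber_le ha hsub j
    _ = (n + 1) * (ENNReal.ofReal (lineConst * a) ^ n * (1 + logGap M (h p))) := by simp

end IsCauchyBoundedOnLines

end Cube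

/-! ### The doubling index -/

section MeanSquare

variable {E : Type*} [NormedAddCommGroup E]

lemma meanKernel_le_one (y : E) : meanKernel y ≤ 1 :=
  pow_le_one₀ (le_max_right _ _) (max_le (sub_le_self _ (sq_nonneg _)) zero_le_one)

variable [MeasurableSpace E]

lemma setIntegral_ball_mul_meanKernel (μ : Measure E) (f : E → ℝ) :
    ∫ y in ball 0 1, f y * meanKernel y ∂μ = ∫ y, f y * meanKernel y ∂μ :=
  setIntegral_eq_integral_of_forall_compl_eq_zero fun y hy => by
    rw [meanKernel_eq_zero (by simpa using hy), mul_zero]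

variable [InnerProductSpace ℝ E] [FiniteDimensional ℝ E] [BorelSpace E] {u : E → ℝ} {Ω : Set E}
  {x : E} {R : ℝ}

lemma setIntegral_ball_comp_add_smul (g : E → ℝ) (x : E) (hR : 0 < R) :
    ∫ z in ball 0 1, g (x + R • z) = (R ^ Module.finrank ℝ E)⁻¹ * ∫ y in ball x R, g y := by
  have hind : (fun z => (ball (0 : E) 1).indicator (fun z => g (x + R • z)) z) =
      fun z => (ball x R).indicator g (x + R • z) := by
    ext z
    have hmem : x + R • z ∈ ball x R ↔ z ∈ ball 0 1 := by
      rw [mem_ball, dist_self_add_left, norm_smul, Real.norm_of_nonneg hR.le, mem_ball_zero_iff,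
        mul_lt_iff_lt_one_right hR]
    by_cases hz : z ∈ ball 0 1
    · rw [indicator_of_mem hz, indicator_of_mem (hmem.2 hz)]
    · rw [indicator_of_notMem hz, indicator_of_notMem (mt hmem.1 hz)]
  rw [← integral_indicator measurableSet_ball, hind,
    Measure.integral_comp_smul_of_nonneg volume (fun z => (ball x R).indicator g (x + z)) R
      (hR := hR.le), integral_add_left_eq_self, integral_indicator measurableSet_ball, smul_eq_mul]

lemma HasKernelMeanOn.kernelMass_mul_sq_le (hu : HasKernelMeanOn u Ω) (hR : 0 < R)
    (hsub : closedBall x R ⊆ Ω) :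
    kernelMass E * u x ^ 2 ≤ (R ^ Module.finrank ℝ E)⁻¹ * ∫ y in ball x R, u y ^ 2 := by
  have hcont : ContinuousOn (fun z => u (x + R • z)) (closedBall 0 1) :=
    hu.continuousOn.comp (by fun_prop) fun z hz =>
      hsub (add_smul_mem_closedBall hR.le (mem_closedBall_zero_iff.1 hz))
  have hint {f : E → ℝ} (hf : ContinuousOn f (closedBall 0 1)) : IntegrableOn f (ball 0 1) :=
    (hf.integrableOn_compact (isCompact_closedBall 0 1)).mono_set ball_subset_closedBall
  have hkernel : IntegrableOn (meanKernel : E → ℝ) (ball 0 1) :=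
    hint contDiff_meanKernel.continuous.continuousOn
  have hprod : IntegrableOn (fun z => u (x + R • z) * meanKernel z) (ball 0 1) :=
    hint (hcont.mul contDiff_meanKernel.continuous.continuousOn)
  have hmass : ∫ z in ball (0 : E) 1, meanKernel z = kernelMass E := by
    simpa [kernelMass] using setIntegral_ball_mul_meanKernel volume (fun _ : E => (1 : ℝ))
  calc kernelMass E * u x ^ 2
      = 2 * u x * (kernelMass E * u x) - u x ^ 2 * kernelMass E := by ring
    _ = ∫ z in ball 0 1, (2 * u x * (u (x + R • z) * meanKernel z) - u x ^ 2 * meanKernel z) := by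
        rw [integral_sub (hprod.const_mul _) (hkernel.const_mul _),
          integral_const_mul, integral_const_mul, setIntegral_ball_mul_meanKernel,
          hu.integral_eq x R hR hsub, hmass]
    _ ≤ ∫ z in ball 0 1, u (x + R • z) ^ 2 := by
        refine setIntegral_mono ((hprod.const_mul _).sub (hkernel.const_mul _))
          (hint (hcont.pow 2)) fun z => ?_
        calc 2 * u x * (u (x + R • z) * meanKernel z) - u x ^ 2 * meanKernel z
            ≤ u (x + R • z) ^ 2 * meanKernel z := by
              nlinarith [mul_nonneg (sq_nonneg (u (x + R • z) - u x)) (meanKernel_nonneg z)]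
          _ ≤ u (x + R • z) ^ 2 := mul_le_of_le_one_right (sq_nonneg _) (meanKernel_le_one z)
    _ = (R ^ Module.finrank ℝ E)⁻¹ * ∫ y in ball x R, u y ^ 2 :=
        setIntegral_ball_comp_add_smul (fun y => u y ^ 2) x hR

end MeanSquare

section Doubling

variable {d : ℕ} {Ω : Set (Euc d)} {u : Euc d → ℝ} {x y : Euc d} {r R ρ : ℝ}

lemma Hfun_eq_of_ball_subset (h : ball x R ⊆ Ω) : Hfun Ω u x R = ∫ y in ball x R, u y ^ 2 := by
  rw [Hfun, inter_eq_self_of_subset_left h]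

lemma Hfun_le_of_abs_le {A : ℝ} (hR : 0 < R) (hsub : ball x R ⊆ Ω)
    (hA : ∀ y ∈ ball x R, |u y| ≤ A) :
    Hfun Ω u x R ≤ R ^ d * volume.real (ball (0 : Euc d) 1) * A ^ 2 := by
  have hsq : ∀ y ∈ ball x R, ‖u y ^ 2‖ ≤ A ^ 2 := fun y hy => by
    rw [norm_pow]
    exact pow_le_pow_left₀ (norm_nonneg _) (hA y hy) 2
  have hvol : volume.real (ball x R) = R ^ d * volume.real (ball (0 : Euc d) 1) := by
    simp [measureReal_def, Measure.addHaar_ball_of_pos _ _ hR, hR.le]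
  rw [Hfun_eq_of_ball_subset hsub]
  calc ∫ y in ball x R, u y ^ 2 ≤ A ^ 2 * volume.real (ball x R) :=
        (le_abs_self _).trans (norm_setIntegral_le_of_norm_le_const measure_ball_lt_top hsq)
    _ = R ^ d * volume.real (ball (0 : Euc d) 1) * A ^ 2 := by rw [hvol, mul_comm]

namespace HasKernelMeanOn

lemma integrableOn_sq (hu : HasKernelMeanOn u Ω) (hsub : closedBall x R ⊆ Ω) :
    IntegrableOn (fun y => u y ^ 2) (ball x R) :=
  (((hu.continuousOn.mono hsub).pow 2).integrableOn_compact (isCompact_closedBall x R)).mono_set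
    ball_subset_closedBall

lemma setIntegral_sq_le_Hfun (hu : HasKernelMeanOn u Ω) (hsub : closedBall x R ⊆ Ω)
    (h : dist y x + ρ ≤ R) : ∫ z in ball y ρ, u z ^ 2 ≤ Hfun Ω u x R := by
  rw [Hfun_eq_of_ball_subset (ball_subset_closedBall.trans hsub)]
  exact setIntegral_mono_set (hu.integrableOn_sq hsub) (ae_of_all _ fun z => sq_nonneg _)
    (ball_subset_ball' (by linarith)).eventuallyLE

lemma Hfun_mono (hu : HasKernelMeanOn u Ω) (hsub : closedBall x R ⊆ Ω) (h : ρ ≤ R) :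
    Hfun Ω u x ρ ≤ Hfun Ω u x R := by
  rw [Hfun_eq_of_ball_subset ((ball_subset_ball h).trans (ball_subset_closedBall.trans hsub))]
  exact hu.setIntegral_sq_le_Hfun hsub (by simpa using h)

lemma kernelMass_mul_sq_le_Hfun (hu : HasKernelMeanOn u Ω) (hρ : 0 < ρ)
    (hsub : closedBall x R ⊆ Ω) (h : dist y x + ρ ≤ R) :
    ρ ^ d * kernelMass (Euc d) * u y ^ 2 ≤ Hfun Ω u x R := by
  have hmean := hu.kernelMass_mul_sq_le hρ
    ((closedBall_subset_closedBall' (by linarith)).trans hsub : closedBall y ρ ⊆ Ω)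
  rw [finrank_euclideanSpace_fin, le_inv_mul_iff₀ (pow_pos hρ d), ← mul_assoc] at hmean
  exact hmean.trans (hu.setIntegral_sq_le_Hfun hsub h)

lemma abs_le_sqrt_Hfun_div (hu : HasKernelMeanOn u Ω) (hρ : 0 < ρ)
    (hsub : closedBall x R ⊆ Ω) (h : dist y x + ρ ≤ R) :
    |u y| ≤ √(Hfun Ω u x R / (ρ ^ d * kernelMass (Euc d))) := by
  have hκ := kernelMass_pos (E := Euc d)
  exact Real.abs_le_sqrt ((le_div_iff₀' (by positivity)).2
    (hu.kernelMass_mul_sq_le_Hfun hρ hsub h))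

lemma exists_mem_ball_ne_zero (hu : HasKernelMeanOn u Ω) (hΩ : IsOpen Ω)
    (hconn : IsPreconnected Ω) (hne : ∃ y ∈ Ω, u y ≠ 0) (hx : x ∈ Ω) (hR : 0 < R) :
    ∃ y ∈ ball x R, u y ≠ 0 := by
  by_contra! hzero
  obtain ⟨v, -, k, hk⟩ := hu.exists_iterDirDeriv_ne_zero hΩ hconn dense_univ hne hx
  exact hk (iterDirDeriv_eventuallyEq_zero
    (eventually_of_mem (ball_mem_nhds x hR) hzero) v k).self_of_nhds

lemma Hfun_pos (hu : HasKernelMeanOn u Ω) (hΩ : IsOpen Ω) (hconn : IsPreconnected Ω)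
    (hne : ∃ y ∈ Ω, u y ≠ 0) (hR : 0 < R) (hsub : closedBall x R ⊆ Ω) : 0 < Hfun Ω u x R := by
  obtain ⟨y, hy, hyne⟩ := hu.exists_mem_ball_ne_zero hΩ hconn hne
    (hsub (mem_closedBall_self hR.le)) hR
  have hρ : 0 < R - dist y x := sub_pos.2 hy
  have hκ := kernelMass_pos (E := Euc d)
  exact (by positivity : 0 < (R - dist y x) ^ d * kernelMass (Euc d) * u y ^ 2).trans_le
    (hu.kernelMass_mul_sq_le_Hfun hρ hsub (by linarith))

lemma Nfun_nonneg (hu : HasKernelMeanOn u Ω) (hΩ : IsOpen Ω) (hconn : IsPreconnected Ω)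
    (hne : ∃ y ∈ Ω, u y ≠ 0) (hR : 0 < R) (hsub : closedBall x (2 * R) ⊆ Ω) :
    0 ≤ Nfun Ω u x R :=
  Real.log_nonneg ((one_le_div (hu.Hfun_pos hΩ hconn hne hR
    ((closedBall_subset_closedBall (by linarith)).trans hsub))).2
      (hu.Hfun_mono hsub (by linarith)))

end HasKernelMeanOn

end Doubling

section LogGap

variable {d : ℕ} {Ω : Set (Euc d)} {u : Euc d → ℝ} {x p : Euc d} {r : ℝ}

/-- The constant relating the doubling index on `ball x (4 * r)` to the gap between
`sup |u|` on `closedBall x (15 / 2 * r)` and `sup |u|` on `closedBall x (4 * r)`. -/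
def doublingConst (d : ℕ) : ℝ :=
  1 + |Real.log (volume.real (ball (0 : Euc d) 1) * 16 ^ d / kernelMass (Euc d))|

lemma doublingConst_pos (d : ℕ) : 0 < doublingConst d := by
  unfold doublingConst
  positivity

lemma volume_real_unitBall_pos (d : ℕ) : 0 < volume.real (ball (0 : Euc d) 1) :=
  ENNReal.toReal_pos (measure_ball_pos volume _ one_pos).ne' measure_ball_lt_top.ne

namespace HasKernelMeanOn

lemma log_sqrt_Hfun_div_abs_le (hu : HasKernelMeanOn u Ω) (hr : 0 < r)
    (hsub : closedBall x (8 * r) ⊆ Ω) (hpos : 0 < Hfun Ω u x (4 * r)) (hp0 : u p ≠ 0)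
    (hp : ∀ y ∈ closedBall x (4 * r), |u y| ≤ |u p|) :
    2 * Real.log (√(Hfun Ω u x (8 * r) / ((r / 4) ^ d * kernelMass (Euc d))) / |u p|) ≤
      Nfun Ω u x (4 * r) +
        Real.log (volume.real (ball (0 : Euc d) 1) * 16 ^ d / kernelMass (Euc d)) := by
  have hκ := kernelMass_pos (E := Euc d)
  have hV := volume_real_unitBall_pos d
  have hpos8 : 0 < Hfun Ω u x (8 * r) := hpos.trans_le (hu.Hfun_mono hsub (by linarith))
  have hH4 : Hfun Ω u x (4 * r) ≤
      16 ^ d * (r / 4) ^ d * volume.real (ball (0 : Euc d) 1) * u p ^ 2 := by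
    rw [← mul_pow, ← sq_abs (u p), show 16 * (r / 4) = 4 * r by ring]
    exact Hfun_le_of_abs_le (by positivity)
      ((ball_subset_closedBall.trans (closedBall_subset_closedBall (by linarith))).trans hsub)
      fun y hy => hp y (ball_subset_closedBall hy)
  have hsq : (√(Hfun Ω u x (8 * r) / ((r / 4) ^ d * kernelMass (Euc d))) / |u p|) ^ 2 ≤
      Hfun Ω u x (8 * r) / Hfun Ω u x (4 * r) *
        (volume.real (ball (0 : Euc d) 1) * 16 ^ d / kernelMass (Euc d)) := by
    rw [div_pow, sq_abs, Real.sq_sqrt (by positivity), div_div, div_mul_div_comm,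
      div_le_div_iff₀ (by positivity) (by positivity)]
    calc Hfun Ω u x (8 * r) * (Hfun Ω u x (4 * r) * kernelMass (Euc d))
        ≤ Hfun Ω u x (8 * r) * (16 ^ d * (r / 4) ^ d * volume.real (ball (0 : Euc d) 1) *
            u p ^ 2 * kernelMass (Euc d)) := by gcongr
      _ = _ := by ring
  have hlog := Real.log_le_log (by positivity) hsq
  rw [Real.log_pow, Real.log_mul (by positivity) (by positivity)] at hlog
  rw [Nfun, ← mul_assoc, show (2 : ℝ) * 4 = 8 by norm_num]
  exact_mod_cast hlog

lemma exists_one_add_logGap_le (hu : HasKernelMeanOn u Ω) (hΩ : IsOpen Ω)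
    (hconn : IsPreconnected Ω) (hne : ∃ y ∈ Ω, u y ≠ 0) (hr : 0 < r)
    (hsub : closedBall x (8 * r) ⊆ Ω) :
    ∃ M, ∃ p ∈ closedBall x (4 * r), (∀ y ∈ closedBall x (15 / 2 * r), |u y| ≤ M) ∧
      1 + logGap M (u p) ≤ ENNReal.ofReal (doublingConst d * (Nfun Ω u x (4 * r) + 1)) := by
  have hsub4 : closedBall x (4 * r) ⊆ Ω :=
    (closedBall_subset_closedBall (by linarith)).trans hsub
  have hpos := hu.Hfun_pos hΩ hconn hne (by positivity) hsub4
  have hN := hu.Nfun_nonneg hΩ hconn hne (R := 4 * r) (by positivity)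
    (by rwa [← mul_assoc, show (2 : ℝ) * 4 = 8 by norm_num])
  obtain ⟨p, hp, hpmax⟩ := (isCompact_closedBall x (4 * r)).exists_isMaxOn
    ⟨x, mem_closedBall_self (by positivity)⟩ (hu.continuousOn.mono hsub4).abs
  have hp0 : u p ≠ 0 := by
    obtain ⟨y, hy, hyne⟩ := hu.exists_mem_ball_ne_zero hΩ hconn hne
      (hsub4 (mem_closedBall_self (by positivity))) (show 0 < 4 * r by positivity)
    exact abs_pos.1 ((abs_pos.2 hyne).trans_le (hpmax (ball_subset_closedBall hy)))
  refine ⟨_, p, hp, fun y hy => hu.abs_le_sqrt_Hfun_div (ρ := r / 4) (by positivity) hsub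
    (by linarith [mem_closedBall.1 hy]), ?_⟩
  have hlog := hu.log_sqrt_Hfun_div_abs_le hr hsub hpos hp0 hpmax
  set L := Real.log (volume.real (ball (0 : Euc d) 1) * 16 ^ d / kernelMass (Euc d)) with hL
  rw [logGap_of_ne_zero _ hp0, doublingConst, ← hL]
  calc 1 + ENNReal.ofReal (Real.log (_ / |u p|))
      ≤ ENNReal.ofReal 1 + ENNReal.ofReal (Nfun Ω u x (4 * r) + |L|) := by
        rw [ENNReal.ofReal_one]
        gcongr
        linarith [le_abs_self L, abs_nonneg L]
    _ = ENNReal.ofReal (1 + (Nfun Ω u x (4 * r) + |L|)) :=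
        (ENNReal.ofReal_add zero_le_one (by positivity)).symm
    _ ≤ ENNReal.ofReal ((1 + |L|) * (Nfun Ω u x (4 * r) + 1)) := by
        refine ENNReal.ofReal_le_ofReal ?_
        linarith [mul_nonneg (abs_nonneg L) hN]

end HasKernelMeanOn

end LogGap

/-! ### The nodal bound -/

lemma HasKernelMeanOn.isCauchyBoundedOnLines {E : Type*} [NormedAddCommGroup E]
    [InnerProductSpace ℝ E] [FiniteDimensional ℝ E] [MeasurableSpace E] [BorelSpace E] {u : E → ℝ}
    {Ω : Set E} (hu : HasKernelMeanOn u Ω) (hΩ : IsOpen Ω) {x : E} {ρ a R M : ℝ} (ha : 0 < a)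
    (hR : 0 < R) (haR : 3 * a * cauchyConst E ≤ R) (hsub : closedBall x (ρ + a + R) ⊆ Ω)
    (hM : ∀ y ∈ closedBall x (ρ + a + R), |u y| ≤ M) :
    IsCauchyBoundedOnLines u (closedBall x ρ) a M := by
  intro y hy v hv
  have hball : ∀ t ∈ Icc (-a) a, closedBall (y + t • v) R ⊆ closedBall x (ρ + a + R) := by
    intro t ht
    have hty : dist (y + t • v) y ≤ a := by
      rw [dist_self_add_left, norm_smul, hv, mul_one]
      exact abs_le.2 ht
    exact closedBall_subset_closedBall'
      (by linarith [dist_triangle (y + t • v) y x, mem_closedBall.1 hy])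
  refine ⟨fun k t => iterDirDeriv v u k (y + t • v), ⟨?_, ?_⟩, rfl⟩
  · exact hu.isDerivSeqOn_iterDirDeriv hΩ fun t ht =>
      hsub (hball t ht (mem_closedBall_self hR.le))
  · intro k t ht
    have hM0 : 0 ≤ M := (abs_nonneg _).trans (hM _ (hball t ht (mem_closedBall_self hR.le)))
    have hA := cauchyConst_nonneg (E := E)
    have hratio : cauchyConst E * ‖v‖ / R ≤ (3 * a)⁻¹ := by
      rw [hv, mul_one, div_le_iff₀ hR, inv_mul_eq_div, le_div_iff₀ (by positivity)]
      linarith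
    calc |iterDirDeriv v u k (y + t • v)|
        ≤ M * k.factorial * (cauchyConst E * ‖v‖ / R) ^ k :=
          hu.abs_iterDirDeriv_le hΩ hR ((hball t ht).trans hsub) (fun z hz => hM z (hball t ht hz))
            v k
      _ ≤ M * k.factorial * (3 * a)⁻¹ ^ k := by gcongr
      _ = M * k.factorial / (3 * a) ^ k := by rw [inv_pow, div_eq_mul_inv]

lemma exists_finset_forall_ball_subset_biUnion {E : Type*} [NormedAddCommGroup E]
    [NormedSpace ℝ E] [ProperSpace E] {κ : ℝ} (hκ : 0 < κ) :
    ∃ t : Finset E, (∀ z ∈ t, ‖z‖ ≤ 1) ∧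
      ∀ (x : E) (r : ℝ), 0 < r → ball x r ⊆ ⋃ z ∈ t, ball (x + r • z) (κ * r) := by
  obtain ⟨t, htsub, htfin, hcover⟩ := (isCompact_closedBall (0 : E) 1).finite_cover_balls hκ
  refine ⟨htfin.toFinset, fun z hz => ?_, fun x r hr w hw => ?_⟩
  · exact mem_closedBall_zero_iff.1 (htsub (htfin.mem_toFinset.1 hz))
  · have hunit : r⁻¹ • (w - x) ∈ closedBall (0 : E) 1 := by
      rw [mem_closedBall_zero_iff, norm_smul, norm_inv, Real.norm_of_nonneg hr.le,
        inv_mul_le_iff₀ hr, mul_one]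
      exact (mem_ball_iff_norm.1 hw).le
    obtain ⟨z, hz, hwz⟩ := mem_iUnion₂.1 (hcover hunit)
    refine mem_iUnion₂.2 ⟨z, htfin.mem_toFinset.2 hz, ?_⟩
    have hscale : w - (x + r • z) = r • (r⁻¹ • (w - x) - z) := by
      rw [smul_sub, smul_inv_smul₀ hr.ne', sub_sub]
    rw [mem_ball_iff_norm, hscale, norm_smul, Real.norm_of_nonneg hr.le, mul_comm]
    exact mul_lt_mul_of_pos_right (mem_ball_iff_norm.1 hwz) hr

section NodalBound

variable {n : ℕ} {Ω P : Set (Euc (n + 1))} {h : Euc (n + 1) → ℝ} {x p q : Euc (n + 1)} {a M r : ℝ}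

lemma IsCauchyBoundedOnLines.hausdorffMeasure_zeroSet_ball_le (hL : IsCauchyBoundedOnLines h P a M)
    (ha : 0 < a) (hu : HasKernelMeanOn h Ω) (hΩ : IsOpen Ω) (hconn : IsPreconnected Ω)
    (hne : ∃ y ∈ Ω, h y ≠ 0) (hPΩ : P ⊆ Ω) (hpq : closedBall q (dist p q) ⊆ P)
    (hq : closedBall q ((n + 2) * a) ⊆ P) {m : ℕ} (hm : dist p q ≤ (m + 1) * (a / 2)) :
    μH[n] (zeroSet (ball q (a / 2)) h) ≤ (3 * n) ^ n * ((n + 1) *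
      (ENNReal.ofReal (lineConst * a) ^ n *
        (ENNReal.ofReal (2 * lineConst) ^ m * (1 + logGap M (h p))))) := by
  obtain ⟨p', hp'q, hp'⟩ := hL.exists_dist_le_and_one_add_logGap_le_pow ha q m p hpq hm
  have hp'P : closedBall p' ((n + 1) * a) ⊆ P :=
    (closedBall_subset_closedBall' (by linarith)).trans hq
  have hcube : ball q (a / 2) ⊆ cube p' (2 * a) :=
    ball_subset_cube (by linarith [dist_comm p' q])
  calc μH[n] (zeroSet (ball q (a / 2)) h) ≤ μH[n] (zeroSet (cube p' (2 * a)) h) :=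
        measure_mono fun z hz => ⟨hcube hz.1, hz.2⟩
    _ ≤ (3 * n) ^ n * ((n + 1) * (ENNReal.ofReal (lineConst * a) ^ n * (1 + logGap M (h p')))) :=
        hL.hausdorffMeasure_zeroSet_cube_le ha hu hΩ hconn hne hPΩ hp'P
    _ ≤ _ := by gcongr

/-- Half the side of the cubes into which a ball of radius `1` is divided: small enough for the
derivative estimates to hold on lines of length `2 * cellScale n` and for the cubes to stay in a
slightly larger ball. -/
def cellScale (n : ℕ) : ℝ := 1 / (3 * cauchyConst (Euc (n + 1)) + 2 * (n + 2))

lemma cellScale_pos (n : ℕ) : 0 < cellScale n := by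
  have hA := cauchyConst_nonneg (E := Euc (n + 1))
  unfold cellScale
  positivity

lemma three_mul_cellScale_mul_cauchyConst_le (n : ℕ) :
    3 * cellScale n * cauchyConst (Euc (n + 1)) ≤ 1 := by
  have hA := cauchyConst_nonneg (E := Euc (n + 1))
  rw [cellScale, mul_one_div, div_mul_eq_mul_div, div_le_one (by positivity)]
  linarith

lemma add_two_mul_cellScale_le (n : ℕ) : (n + 2) * cellScale n ≤ 1 / 2 := by
  have hA := cauchyConst_nonneg (E := Euc (n + 1))
  rw [cellScale, mul_one_div, div_le_div_iff₀ (by positivity) two_pos]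
  linarith

/-- The constant of the nodal bound on a single cell of `hausdorffMeasure_zeroSet_cell_le`; its
exponent `⌈10 / cellScale n⌉₊` bounds the length of the chain leading to the cell. -/
def cellConst (n : ℕ) : ℝ :=
  (3 * n) ^ n * ((n + 1) * ((lineConst * cellScale n) ^ n *
    ((2 * lineConst) ^ ⌈10 / cellScale n⌉₊ * doublingConst (n + 1))))

lemma cellConst_nonneg (n : ℕ) : 0 ≤ cellConst n := by
  have hκ := cellScale_pos n
  have hK := lineConst_pos
  have hD := doublingConst_pos (n + 1)
  unfold cellConst
  positivity

lemma ofReal_cellConst_mul (n : ℕ) (N : ℝ) (hr : 0 ≤ r) :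
    ENNReal.ofReal (cellConst n * N * r ^ n) = (3 * n) ^ n * ((n + 1) *
      (ENNReal.ofReal (lineConst * (cellScale n * r)) ^ n *
        (ENNReal.ofReal (2 * lineConst) ^ ⌈10 / cellScale n⌉₊ *
          ENNReal.ofReal (doublingConst (n + 1) * N)))) := by
  have hκ := cellScale_pos n
  have hK := lineConst_pos
  have hreal : cellConst n * N * r ^ n = (3 * n) ^ n * ((n + 1 : ℕ) *
      ((lineConst * (cellScale n * r)) ^ n *
        ((2 * lineConst) ^ ⌈10 / cellScale n⌉₊ * (doublingConst (n + 1) * N)))) := by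
    rw [cellConst, Nat.cast_add_one]
    ring
  rw [hreal, ENNReal.ofReal_mul (by positivity), ENNReal.ofReal_mul (by positivity),
    ENNReal.ofReal_mul (by positivity), ENNReal.ofReal_mul (by positivity),
    ENNReal.ofReal_pow (by positivity), ENNReal.ofReal_pow (by positivity),
    ENNReal.ofReal_pow (by positivity), ENNReal.ofReal_mul zero_le_three, ENNReal.ofReal_natCast,
    ENNReal.ofReal_natCast, ENNReal.ofReal_ofNat, Nat.cast_add_one]

lemma HasKernelMeanOn.hausdorffMeasure_zeroSet_cell_le (hu : HasKernelMeanOn h Ω) (hΩ : IsOpen Ω)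
    (hconn : IsPreconnected Ω) (hne : ∃ y ∈ Ω, h y ≠ 0) (hr : 0 < r)
    (hsub : closedBall x (8 * r) ⊆ Ω) (hq : dist q x ≤ r) :
    μH[n] (zeroSet (ball q (cellScale n * r / 2)) h) ≤
      ENNReal.ofReal (cellConst n * (Nfun Ω h x (4 * r) + 1) * r ^ n) := by
  have hκ := cellScale_pos n
  have ha : 0 < cellScale n * r := by positivity
  have haR : 3 * (cellScale n * r) * cauchyConst (Euc (n + 1)) ≤ r := by
    linarith [mul_le_mul_of_nonneg_right (three_mul_cellScale_mul_cauchyConst_le n) hr.le]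
  have hna : (n + 2) * (cellScale n * r) ≤ r / 2 := by
    linarith [mul_le_mul_of_nonneg_right (add_two_mul_cellScale_le n) hr.le]
  have har : cellScale n * r ≤ r / 2 :=
    (le_mul_of_one_le_left ha.le (by linarith [n.cast_nonneg (α := ℝ)])).trans hna
  obtain ⟨M, p, hp, hM, hgap⟩ := hu.exists_one_add_logGap_le hΩ hconn hne hr hsub
  have hL : IsCauchyBoundedOnLines h (closedBall x (6 * r)) (cellScale n * r) M := by
    have hball : closedBall x (6 * r + cellScale n * r + r) ⊆ closedBall x (15 / 2 * r) :=
      closedBall_subset_closedBall (by linarith)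
    exact hu.isCauchyBoundedOnLines hΩ ha hr haR
      (hball.trans ((closedBall_subset_closedBall (by linarith)).trans hsub))
      fun y hy => hM y (hball hy)
  have hpq : dist p q ≤ 5 * r := by linarith [dist_triangle_right p q x, mem_closedBall.1 hp]
  have hchain : dist p q ≤ (⌈10 / cellScale n⌉₊ + 1) * (cellScale n * r / 2) := by
    have hceil := mul_le_mul_of_nonneg_right
      ((div_le_iff₀ hκ).1 (Nat.le_ceil (10 / cellScale n))) hr.le
    linarith
  calc μH[n] (zeroSet (ball q (cellScale n * r / 2)) h)
      ≤ (3 * n) ^ n * ((n + 1) * (ENNReal.ofReal (lineConst * (cellScale n * r)) ^ n *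
          (ENNReal.ofReal (2 * lineConst) ^ ⌈10 / cellScale n⌉₊ * (1 + logGap M (h p))))) :=
        hL.hausdorffMeasure_zeroSet_ball_le ha hu hΩ hconn hne
          ((closedBall_subset_closedBall (by linarith)).trans hsub)
          (closedBall_subset_closedBall' (by linarith))
          (closedBall_subset_closedBall' (by linarith)) hchain
    _ ≤ (3 * n) ^ n * ((n + 1) * (ENNReal.ofReal (lineConst * (cellScale n * r)) ^ n *
          (ENNReal.ofReal (2 * lineConst) ^ ⌈10 / cellScale n⌉₊ *
            ENNReal.ofReal (doublingConst (n + 1) * (Nfun Ω h x (4 * r) + 1))))) := by gcongr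
    _ = ENNReal.ofReal (cellConst n * (Nfun Ω h x (4 * r) + 1) * r ^ n) :=
        (ofReal_cellConst_mul n _ hr.le).symm

end NodalBound

/-- Interior nodal set bound of Donnelly–Fefferman type for
harmonic functions: `ℋ^n(Z(h) ∩ B(x,r)) ≤ C (N_h(x,4r) + 1) r^n` whenever
`B(x,8r)` has closure contained in `Ω`; `C = C(n)`. -/
theorem nodal_bound_interior_balls {n : ℕ} :
    ∃ C : ℝ, 0 < C ∧ ∀ Ω : Set (Euc (n + 1)), IsOpen Ω → IsConnected Ω →
      ∀ h : Euc (n + 1) → ℝ, HarmonicOn h Ω → (∃ y ∈ Ω, h y ≠ 0) →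
      ∀ (x : Euc (n + 1)) (r : ℝ), 0 < r → closure (ball x (8 * r)) ⊆ Ω →
        μH[(n : ℝ)] (zeroSet Ω h ∩ ball x r) ≤
          ENNReal.ofReal (C * (Nfun Ω h x (4 * r) + 1) * r ^ n) := by
  obtain ⟨t, ht, hcover⟩ := exists_finset_forall_ball_subset_biUnion (E := Euc (n + 1))
    (half_pos (cellScale_pos n))
  have hc := cellConst_nonneg n
  refine ⟨t.card * cellConst n + 1, by positivity, fun Ω hΩ hconn h hh hne x r hr hsub => ?_⟩
  rw [closure_ball _ (by positivity)] at hsub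
  have hu := hh.hasKernelMeanOn hΩ
  have hN : 0 ≤ Nfun Ω h x (4 * r) := hu.Nfun_nonneg hΩ hconn.isPreconnected hne (by positivity)
    (by rwa [← mul_assoc, show (2 : ℝ) * 4 = 8 by norm_num])
  have hcells : zeroSet Ω h ∩ ball x r ⊆
      ⋃ z ∈ t, zeroSet (ball (x + r • z) (cellScale n * r / 2)) h := fun y hy => by
    obtain ⟨z, hz, hyz⟩ := mem_iUnion₂.1 (hcover x r hr hy.2)
    exact mem_iUnion₂.2 ⟨z, hz, div_mul_eq_mul_div (cellScale n) 2 r ▸ hyz, hy.1.2⟩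
  calc μH[(n : ℝ)] (zeroSet Ω h ∩ ball x r)
      ≤ ∑ z ∈ t, μH[n] (zeroSet (ball (x + r • z) (cellScale n * r / 2)) h) :=
        (measure_mono hcells).trans (measure_biUnion_finset_le t _)
    _ ≤ t.card • ENNReal.ofReal (cellConst n * (Nfun Ω h x (4 * r) + 1) * r ^ n) :=
        Finset.sum_le_card_nsmul _ _ _ fun z hz => hu.hausdorffMeasure_zeroSet_cell_le hΩ
          hconn.isPreconnected hne hr hsub (add_smul_mem_closedBall hr.le (ht z hz))
    _ = ENNReal.ofReal (t.card * (cellConst n * (Nfun Ω h x (4 * r) + 1) * r ^ n)) := by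
        rw [nsmul_eq_mul, ENNReal.ofReal_mul (Nat.cast_nonneg _), ENNReal.ofReal_natCast]
    _ ≤ ENNReal.ofReal ((t.card * cellConst n + 1) * (Nfun Ω h x (4 * r) + 1) * r ^ n) := by
        rw [← mul_assoc, ← mul_assoc]
        gcongr
        exact le_add_of_nonneg_right zero_le_one

end NodalNeumann
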